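/- arXiv:1708.00832 — 2 statements merged into one kernel-verified Lean document; each statement's English description precedes it below -/
import Mathlib

section
/- Let T = {1342, 2431, 3412} (patterns of length 4). Then the generating function for T-avoiders satisfies, as formal power series over ℚ, x·(1-3x+x^2)·(1-x+x^3)·F_T(x) = (1-x)^2·(1-4x+6x^2-5x^3+x^4)·C(x) - (1 - 6x + 14x^2 - 15x^3 + 8x^4 - x^5), where C(x) is the Catalan number generating function. -/
open PowerSeries

/-- A permutation `π` of `{0,…,n-1}` contains the pattern `σ` (of length `k`) if there is an
order-embedding of positions on which the values of `π` appear in the same relative order as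
the values of `σ`. -/
def ContainsPattern {n k : ℕ} (π : Equiv.Perm (Fin n)) (σ : Fin k → Fin k) : Prop :=
  ∃ f : Fin k ↪o Fin n, ∀ a b : Fin k, σ a < σ b ↔ π (f a) < π (f b)

/-- The number of permutations of length `n` avoiding every pattern in `T`. -/
noncomputable def avoiderCount (T : Set (Fin 4 → Fin 4)) (n : ℕ) : ℕ :=
  Nat.card {π : Equiv.Perm (Fin n) // ∀ σ ∈ T, ¬ ContainsPattern π σ}

/-- The generating function `F_T(x) = ∑_n |S_n(T)| xⁿ` over `ℚ`. -/
noncomputable def avoiderGF (T : Set (Fin 4 → Fin 4)) : PowerSeries ℚ :=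
  PowerSeries.mk fun n => (avoiderCount T n : ℚ)

/-- The generating function of the Catalan numbers over `ℚ`. -/
noncomputable def catalanGF : PowerSeries ℚ :=
  PowerSeries.mk fun n => (catalan n : ℚ)

/-!
Let `n` be the greatest letter of a permutation avoiding `T`. Avoidance across `n` forces the
form `B A n D E`, where `B` and `D` consist of the letters involved in inversions across `n`, and
by value the blocks are stacked in the order `A < D < B < E < n`. Such a word avoids `T` if and
only if each block avoids one of `T`, `{132, 3412}`, `{231}`, `{12}`, according to which of the
other blocks are empty. The same decomposition applies to the avoiders of the latter three sets.
The resulting system of equations for the generating functions expresses `F_T` through `C` with a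
denominator linear in `C`, which multiplication by its conjugate makes rational.
-/

section Patterns

variable {α β : Type*} [LinearOrder α] [LinearOrder β]

/-- The word `l` contains the pattern `σ`: the letters of `σ` can be replaced, preserving their
relative order, so that the result is a subsequence of `l`. Patterns are words over `ℕ` with
least letter `0`, so the paper's `1342` is `[0, 2, 3, 1]`. -/
def WordContains (σ : List ℕ) (l : List α) : Prop :=
  ∃ f : ℕ → α, StrictMonoOn f {i | i ∈ σ} ∧ (σ.map f).Sublist l

/-- The word `l` contains none of the patterns in `T`. -/
def WordAvoids (T : Set (List ℕ)) (l : List α) : Prop :=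
  ∀ σ ∈ T, ¬ WordContains σ l

/-- The set `T = {1342, 2431, 3412}` of the theorem. -/
def patsT : Set (List ℕ) := {[0, 2, 3, 1], [1, 3, 2, 0], [2, 3, 0, 1]}

/-- The pattern `231`, whose avoiders are counted by the Catalan numbers. -/
def pats231 : Set (List ℕ) := {[1, 2, 0]}

/-- The patterns `132` and `3412`. -/
def pats132_3412 : Set (List ℕ) := {[0, 2, 1], [2, 3, 0, 1]}

/-- The pattern `12`, whose avoiders are the weakly decreasing words. -/
def pats12 : Set (List ℕ) := {[0, 1]}

lemma nil_notMem_patsT : [] ∉ patsT := by simp [patsT]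

lemma nil_notMem_pats231 : [] ∉ pats231 := by simp [pats231]

lemma nil_notMem_pats132_3412 : [] ∉ pats132_3412 := by simp [pats132_3412]

lemma nil_notMem_pats12 : [] ∉ pats12 := by simp [pats12]

variable {σ : List ℕ} {T : Set (List ℕ)} {l l' : List α}

lemma WordContains.of_pairwise_lt {v : List α} (d : α) (hv : v.Pairwise (· < ·))
    (hσ : ∀ i ∈ σ, i < v.length) (h : (σ.map (v.getD · d)).Sublist l) : WordContains σ l := by
  refine ⟨(v.getD · d), fun i hi j hj hij => ?_, h⟩
  simp only [List.getD_eq_getElem _ _ (hσ i hi), List.getD_eq_getElem _ _ (hσ j hj)]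
  exact List.pairwise_iff_getElem.1 hv _ _ _ _ hij

lemma WordAvoids.sublist (h : WordAvoids T l) (hl : l'.Sublist l) : WordAvoids T l' :=
  fun σ hσ ⟨f, hf, hs⟩ => h σ hσ ⟨f, hf, hs.trans hl⟩

lemma wordAvoids_nil (hT : [] ∉ T) : WordAvoids T ([] : List α) := by
  rintro σ hσ ⟨f, -, hs⟩
  exact hT (List.map_eq_nil_iff.1 (List.sublist_nil.1 hs) ▸ hσ)

lemma wordContains_map_iff [Nonempty α] {f : α → β} (hf : StrictMono f) :
    WordContains σ (l.map f) ↔ WordContains σ l := by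
  constructor
  · rintro ⟨g, hg, hs⟩
    obtain ⟨l', hl', heq⟩ := List.sublist_map_iff.1 hs
    have hinv : ∀ i ∈ σ, f (Function.invFun f (g i)) = g i := fun i hi => by
      obtain ⟨a, -, ha⟩ := List.mem_map.1 (heq ▸ List.mem_map_of_mem hi : g i ∈ l'.map f)
      exact Function.invFun_eq ⟨a, ha⟩
    refine ⟨Function.invFun f ∘ g, fun i hi j hj hij => ?_, ?_⟩
    · rw [← hf.lt_iff_lt, Function.comp, Function.comp, hinv i hi, hinv j hj]
      exact hg hi hj hij
    · rwa [← List.map_map, heq, List.map_map, Function.invFun_comp hf.injective, List.map_id]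
  · rintro ⟨g, hg, hs⟩
    exact ⟨f ∘ g, hf.comp_strictMonoOn hg, by simpa only [List.map_map] using hs.map f⟩

lemma wordAvoids_map_iff [Nonempty α] {f : α → β} (hf : StrictMono f) :
    WordAvoids T (l.map f) ↔ WordAvoids T l := by
  simp only [WordAvoids, wordContains_map_iff hf]

lemma wordContains_1342_iff : WordContains [0, 2, 3, 1] l ↔
    ∃ p q r s, [p, q, r, s].Sublist l ∧ p < s ∧ s < q ∧ q < r :=
  ⟨fun ⟨f, hf, h⟩ => ⟨f 0, f 2, f 3, f 1, h, hf (by simp) (by simp) (by simp),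
      hf (by simp) (by simp) (by simp), hf (by simp) (by simp) (by simp)⟩,
    fun ⟨p, q, r, s, h, hps, hsq, hqr⟩ =>
      .of_pairwise_lt (v := [p, s, q, r]) p (by grind) (by simp) h⟩

lemma wordContains_2431_iff : WordContains [1, 3, 2, 0] l ↔
    ∃ p q r s, [p, q, r, s].Sublist l ∧ s < p ∧ p < r ∧ r < q :=
  ⟨fun ⟨f, hf, h⟩ => ⟨f 1, f 3, f 2, f 0, h, hf (by simp) (by simp) (by simp),
      hf (by simp) (by simp) (by simp), hf (by simp) (by simp) (by simp)⟩,
    fun ⟨p, q, r, s, h, hsp, hpr, hrq⟩ =>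
      .of_pairwise_lt (v := [s, p, r, q]) p (by grind) (by simp) h⟩

lemma wordContains_3412_iff : WordContains [2, 3, 0, 1] l ↔
    ∃ p q r s, [p, q, r, s].Sublist l ∧ r < s ∧ s < p ∧ p < q :=
  ⟨fun ⟨f, hf, h⟩ => ⟨f 2, f 3, f 0, f 1, h, hf (by simp) (by simp) (by simp),
      hf (by simp) (by simp) (by simp), hf (by simp) (by simp) (by simp)⟩,
    fun ⟨p, q, r, s, h, hrs, hsp, hpq⟩ =>
      .of_pairwise_lt (v := [r, s, p, q]) p (by grind) (by simp) h⟩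

lemma wordContains_231_iff : WordContains [1, 2, 0] l ↔
    ∃ p q r, [p, q, r].Sublist l ∧ r < p ∧ p < q :=
  ⟨fun ⟨f, hf, h⟩ => ⟨f 1, f 2, f 0, h, hf (by simp) (by simp) (by simp),
      hf (by simp) (by simp) (by simp)⟩,
    fun ⟨p, q, r, h, hrp, hpq⟩ =>
      .of_pairwise_lt (v := [r, p, q]) p (by grind) (by simp) h⟩

lemma wordContains_132_iff : WordContains [0, 2, 1] l ↔
    ∃ p q r, [p, q, r].Sublist l ∧ p < r ∧ r < q :=
  ⟨fun ⟨f, hf, h⟩ => ⟨f 0, f 2, f 1, h, hf (by simp) (by simp) (by simp),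
      hf (by simp) (by simp) (by simp)⟩,
    fun ⟨p, q, r, h, hpr, hrq⟩ =>
      .of_pairwise_lt (v := [p, r, q]) p (by grind) (by simp) h⟩

lemma wordContains_12_iff : WordContains [0, 1] l ↔ ∃ p q, [p, q].Sublist l ∧ p < q :=
  ⟨fun ⟨f, hf, h⟩ => ⟨f 0, f 1, h, hf (by simp) (by simp) (by simp)⟩,
    fun ⟨p, q, h, hpq⟩ => .of_pairwise_lt (v := [p, q]) p (by grind) (by simp) h⟩

lemma wordAvoids_patsT_iff : WordAvoids patsT l ↔
    ∀ p q r s, [p, q, r, s].Sublist l →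
      ¬(p < s ∧ s < q ∧ q < r) ∧ ¬(s < p ∧ p < r ∧ r < q) ∧ ¬(r < s ∧ s < p ∧ p < q) := by
  simp only [WordAvoids, patsT, Set.mem_insert_iff, Set.mem_singleton_iff,
    forall_eq_or_imp, forall_eq, wordContains_1342_iff, wordContains_2431_iff,
    wordContains_3412_iff]
  grind

lemma wordAvoids_pats231_iff : WordAvoids pats231 l ↔
    ∀ p q r, [p, q, r].Sublist l → ¬(r < p ∧ p < q) := by
  simp only [WordAvoids, pats231, Set.mem_singleton_iff, forall_eq, wordContains_231_iff]
  grind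

lemma wordAvoids_pats132_3412_iff : WordAvoids pats132_3412 l ↔
    (∀ p q r, [p, q, r].Sublist l → ¬(p < r ∧ r < q)) ∧
      ∀ p q r s, [p, q, r, s].Sublist l → ¬(r < s ∧ s < p ∧ p < q) := by
  simp only [WordAvoids, pats132_3412, Set.mem_insert_iff, Set.mem_singleton_iff,
    forall_eq_or_imp, forall_eq, wordContains_132_iff, wordContains_3412_iff]
  grind

lemma wordAvoids_pats12_iff : WordAvoids pats12 l ↔ ∀ p q, [p, q].Sublist l → ¬ p < q := by
  simp only [WordAvoids, pats12, Set.mem_singleton_iff, forall_eq, wordContains_12_iff]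
  grind

end Patterns

section Layouts

variable {α : Type*} {l L R X Y Z : List α} {p q r s n : α}

lemma pair_sublist_cons_iff : [p, q].Sublist (n :: Y) ↔ [p, q].Sublist Y ∨ p = n ∧ q ∈ Y := by
  simp only [List.cons_sublist_cons', List.singleton_sublist]

lemma triple_sublist_cons_iff :
    [p, q, r].Sublist (n :: Y) ↔ [p, q, r].Sublist Y ∨ p = n ∧ [q, r].Sublist Y :=
  List.cons_sublist_cons'

lemma quadruple_sublist_cons_iff :
    [p, q, r, s].Sublist (n :: Y) ↔ [p, q, r, s].Sublist Y ∨ p = n ∧ [q, r, s].Sublist Y :=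
  List.cons_sublist_cons'

lemma pair_sublist_append_iff : [p, q].Sublist (X ++ Y) ↔
    [p, q].Sublist Y ∨ (p ∈ X ∧ q ∈ Y) ∨ [p, q].Sublist X := by
  induction X with
  | nil => simp
  | cons a X ih =>
    simp only [List.cons_append, pair_sublist_cons_iff, ih, List.mem_cons,
      List.mem_append]
    grind

lemma triple_sublist_append_iff : [p, q, r].Sublist (X ++ Y) ↔
    [p, q, r].Sublist Y ∨ (p ∈ X ∧ [q, r].Sublist Y) ∨ ([p, q].Sublist X ∧ r ∈ Y) ∨
      [p, q, r].Sublist X := by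
  induction X with
  | nil => simp
  | cons a X ih =>
    simp only [List.cons_append, triple_sublist_cons_iff, pair_sublist_cons_iff,
      pair_sublist_append_iff, ih, List.mem_cons]
    grind

lemma quadruple_sublist_append_iff : [p, q, r, s].Sublist (X ++ Y) ↔
    [p, q, r, s].Sublist Y ∨ (p ∈ X ∧ [q, r, s].Sublist Y) ∨
      ([p, q].Sublist X ∧ [r, s].Sublist Y) ∨ ([p, q, r].Sublist X ∧ s ∈ Y) ∨
        [p, q, r, s].Sublist X := by
  induction X with
  | nil => simp
  | cons a X ih =>
    simp only [List.cons_append, quadruple_sublist_cons_iff,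
      triple_sublist_cons_iff, pair_sublist_cons_iff, triple_sublist_append_iff, ih,
      List.mem_cons]
    grind

lemma mem_of_pair_sublist (h : [p, q].Sublist l) : p ∈ l ∧ q ∈ l :=
  ⟨h.subset (by simp), h.subset (by simp)⟩

lemma pairs_sublist_of_triple_sublist (h : [p, q, r].Sublist l) :
    [p, q].Sublist l ∧ [q, r].Sublist l ∧ [p, r].Sublist l :=
  ⟨.trans (by simp) h, .trans (by simp) h, .trans (by simp) h⟩

lemma triples_sublist_of_quadruple_sublist (h : [p, q, r, s].Sublist l) :
    [p, q, r].Sublist l ∧ [q, r, s].Sublist l ∧ [p, q, s].Sublist l ∧ [p, r, s].Sublist l :=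
  ⟨.trans (by simp) h, .trans (by simp) h, .trans (by simp) h, .trans (by simp) h⟩

lemma filter_append_filter_not_eq_self {P : α → Bool}
    (h : l.Pairwise fun u v => P v → P u) : l.filter P ++ l.filter (!P ·) = l := by
  induction l with
  | nil => rfl
  | cons a l ih =>
    obtain ⟨ha, hl⟩ := List.pairwise_cons.1 h
    by_cases hPa : P a
    · simpa [hPa] using ih hl
    · have hP : ∀ x ∈ l, ¬ P x := fun x hx => mt (ha x hx) hPa
      rw [List.filter_eq_nil_iff.2 (by simpa [hPa] using hP),
        List.filter_eq_self.2 (by simpa [hPa] using hP), List.nil_append]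

lemma pair_sublist_or_pair_sublist (hp : p ∈ l) (hq : q ∈ l) (hpq : p ≠ q) :
    [p, q].Sublist l ∨ [q, p].Sublist l := by
  obtain ⟨l₁, l₂, rfl⟩ := List.append_of_mem hp
  rcases List.mem_append.1 hq with hq₁ | hq₂
  · exact Or.inr ((List.singleton_sublist.2 hq₁).append (List.nil_sublist l₂ |>.cons_cons p))
  · have hq₂ := List.singleton_sublist.2 ((List.mem_cons.1 hq₂).resolve_left hpq.symm)
    exact Or.inl ((hq₂.cons_cons p).trans (List.sublist_append_right l₁ _))

variable [LinearOrder α]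

lemma WordAvoids.patsT_of_pats231 (h : WordAvoids pats231 l) : WordAvoids patsT l := by
  rw [wordAvoids_pats231_iff] at h
  rw [wordAvoids_patsT_iff]
  intro p q r s hs
  have := triples_sublist_of_quadruple_sublist hs
  grind

lemma WordAvoids.patsT_of_pats132_3412 (h : WordAvoids pats132_3412 l) :
    WordAvoids patsT l := by
  rw [wordAvoids_pats132_3412_iff] at h
  rw [wordAvoids_patsT_iff]
  intro p q r s hs
  have := triples_sublist_of_quadruple_sublist hs
  grind

lemma WordAvoids.patsT_of_pats12 (h : WordAvoids pats12 l) : WordAvoids patsT l := by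
  rw [wordAvoids_pats12_iff] at h
  rw [wordAvoids_patsT_iff]
  intro p q r s hs
  have := triples_sublist_of_quadruple_sublist hs
  have := @pairs_sublist_of_triple_sublist α
  grind

/-- Every letter of `X` is smaller than every letter of `Y`. -/
def Below (X Y : List α) : Prop := ∀ x ∈ X, ∀ y ∈ Y, x < y

lemma WordAvoids.not_patsT (h : WordAvoids patsT l)
    (hs : [p, q, r, s].Sublist l) :
    ¬(p < s ∧ s < q ∧ q < r) ∧ ¬(s < p ∧ p < r ∧ r < q) ∧ ¬(r < s ∧ s < p ∧ p < q) :=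
  wordAvoids_patsT_iff.1 h p q r s hs

lemma WordAvoids.not_231 (h : WordAvoids pats231 l) (hs : [p, q, r].Sublist l) :
    ¬(r < p ∧ p < q) :=
  wordAvoids_pats231_iff.1 h p q r hs

lemma WordAvoids.not_132 (h : WordAvoids pats132_3412 l) (hs : [p, q, r].Sublist l) :
    ¬(p < r ∧ r < q) :=
  (wordAvoids_pats132_3412_iff.1 h).1 p q r hs

lemma WordAvoids.not_3412 (h : WordAvoids pats132_3412 l) (hs : [p, q, r, s].Sublist l) :
    ¬(r < s ∧ s < p ∧ p < q) :=
  (wordAvoids_pats132_3412_iff.1 h).2 p q r s hs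

lemma WordAvoids.not_lt (h : WordAvoids pats12 l) (hs : [p, q].Sublist l) : ¬ p < q :=
  wordAvoids_pats12_iff.1 h p q hs

lemma Below.lt (h : Below X Y) (hp : p ∈ X) (hq : q ∈ Y) : p < q := h p hp q hq

lemma Below.lt_of_singleton (h : Below X [n]) (hp : p ∈ X) : p < n :=
  h p hp n (List.mem_singleton_self n)

lemma Below.mono_left (h : Below Y Z) (hXY : X ⊆ Y) : Below X Z := fun x hx => h x (hXY hx)

lemma below_append_right_iff : Below X (Y ++ Z) ↔ Below X Y ∧ Below X Z := by
  simp only [Below, List.forall_mem_append, forall_and]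

/-- The words `B`, `A`, `D`, `E` are the blocks of the word `B ++ A ++ n :: (D ++ E)` with greatest
letter `n`: by value they are stacked in the order `A`, `D`, `B`, `E`, and `B` and `D` are the
letters involved in the inversions across `n`. -/
structure IsLayout (B A D E : List α) (n : α) : Prop where
  pairwise_below : [A, D, B, E, [n]].Pairwise Below
  eq_nil_iff : B = [] ↔ D = []

variable {A B D E : List α}

lemma IsLayout.below (h : IsLayout B A D E n) :
    (Below A D ∧ Below A B ∧ Below A E ∧ Below A [n]) ∧ (Below D B ∧ Below D E ∧ Below D [n]) ∧
      (Below B E ∧ Below B [n]) ∧ Below E [n] := by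
  simpa using h.pairwise_below

-- In the proofs by `grind` below, each way of distributing an occurrence of a pattern over the
-- blocks contradicts their order by value or leaves a forbidden pattern within a single block.
lemma wordAvoids_patsT_cons (hR : Below R [n]) (h : WordAvoids patsT R) :
    WordAvoids patsT (n :: R) := by
  rw [wordAvoids_patsT_iff]
  intro p q r s hs
  rw [quadruple_sublist_cons_iff] at hs
  grind only [→ mem_of_pair_sublist, → triples_sublist_of_quadruple_sublist,
    → pairs_sublist_of_triple_sublist, → Below.lt_of_singleton, → WordAvoids.not_patsT]

lemma wordAvoids_patsT_append_cons (hA : Below A [n]) (hE : Below E [n]) (hAE : Below A E)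
    (avA : WordAvoids patsT A) (avE : WordAvoids pats231 E) :
    WordAvoids patsT (A ++ n :: E) := by
  rw [wordAvoids_patsT_iff]
  intro p q r s hs
  simp only [quadruple_sublist_append_iff, quadruple_sublist_cons_iff, triple_sublist_cons_iff,
    pair_sublist_cons_iff, List.mem_cons] at hs
  grind only [→ mem_of_pair_sublist, → triples_sublist_of_quadruple_sublist,
    → pairs_sublist_of_triple_sublist, → Below.lt, → Below.lt_of_singleton,
    → WordAvoids.not_patsT, → WordAvoids.not_231]

lemma IsLayout.wordAvoids_patsT_of_pats132_3412 (h : IsLayout B [] D E n)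
    (avB : WordAvoids pats132_3412 B) (avD : WordAvoids pats12 D) (avE : WordAvoids pats231 E) :
    WordAvoids patsT (B ++ n :: (D ++ E)) := by
  obtain ⟨-, ⟨hDB, hDE, hDn⟩, ⟨hBE, hBn⟩, hEn⟩ := h.below
  rw [wordAvoids_patsT_iff]
  intro p q r s hs
  simp only [quadruple_sublist_append_iff, quadruple_sublist_cons_iff, triple_sublist_append_iff,
    triple_sublist_cons_iff, pair_sublist_append_iff, pair_sublist_cons_iff, List.mem_append,
    List.mem_cons] at hs
  grind only [→ mem_of_pair_sublist, → triples_sublist_of_quadruple_sublist,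
    → pairs_sublist_of_triple_sublist, → Below.lt, → Below.lt_of_singleton, → WordAvoids.not_132,
    → WordAvoids.not_3412, → WordAvoids.not_231, → WordAvoids.not_lt]

lemma IsLayout.wordAvoids_patsT_of_pats12 (h : IsLayout B A D E n) (avB : WordAvoids pats12 B)
    (avA : WordAvoids patsT A) (avD : WordAvoids pats12 D) (avE : WordAvoids pats231 E) :
    WordAvoids patsT (B ++ A ++ n :: (D ++ E)) := by
  obtain ⟨⟨hAD, hAB, hAE, hAn⟩, ⟨hDB, hDE, hDn⟩, ⟨hBE, hBn⟩, hEn⟩ := h.below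
  rw [wordAvoids_patsT_iff]
  intro p q r s hs
  simp only [quadruple_sublist_append_iff, quadruple_sublist_cons_iff, triple_sublist_append_iff,
    triple_sublist_cons_iff, pair_sublist_append_iff, pair_sublist_cons_iff, List.mem_append,
    List.mem_cons] at hs
  grind only [→ mem_of_pair_sublist, → triples_sublist_of_quadruple_sublist,
    → pairs_sublist_of_triple_sublist, → Below.lt, → Below.lt_of_singleton, → WordAvoids.not_patsT,
    → WordAvoids.not_231, → WordAvoids.not_lt]

lemma wordAvoids_pats132_3412_cons (hR : Below R [n]) (h : WordAvoids pats132_3412 R) :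
    WordAvoids pats132_3412 (n :: R) := by
  rw [wordAvoids_pats132_3412_iff]
  simp only [quadruple_sublist_cons_iff, triple_sublist_cons_iff]
  grind only [→ mem_of_pair_sublist, → pairs_sublist_of_triple_sublist, → Below.lt_of_singleton,
    → WordAvoids.not_132, → WordAvoids.not_3412]

lemma wordAvoids_pats132_3412_append_cons (hL : Below L [n]) (hR : Below R [n])
    (hRL : Below R L) (avL : WordAvoids pats132_3412 L) (avR : WordAvoids pats12 R) :
    WordAvoids pats132_3412 (L ++ n :: R) := by
  rw [wordAvoids_pats132_3412_iff]
  simp only [quadruple_sublist_append_iff, quadruple_sublist_cons_iff, triple_sublist_append_iff,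
    triple_sublist_cons_iff, pair_sublist_cons_iff, List.mem_cons]
  grind only [→ mem_of_pair_sublist, → triples_sublist_of_quadruple_sublist,
    → pairs_sublist_of_triple_sublist, → Below.lt, → Below.lt_of_singleton, → WordAvoids.not_132,
    → WordAvoids.not_3412, → WordAvoids.not_lt]

lemma wordAvoids_pats231_append_cons (hL : Below L [n]) (hR : Below R [n]) (hLR : Below L R)
    (avL : WordAvoids pats231 L) (avR : WordAvoids pats231 R) :
    WordAvoids pats231 (L ++ n :: R) := by
  rw [wordAvoids_pats231_iff]
  simp only [triple_sublist_append_iff, triple_sublist_cons_iff, pair_sublist_cons_iff,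
    List.mem_cons]
  grind only [→ mem_of_pair_sublist, → pairs_sublist_of_triple_sublist, → Below.lt,
    → Below.lt_of_singleton, → WordAvoids.not_231]

lemma wordAvoids_pats12_cons (hR : Below R [n]) (h : WordAvoids pats12 R) :
    WordAvoids pats12 (n :: R) := by
  rw [wordAvoids_pats12_iff]
  simp only [pair_sublist_cons_iff]
  grind only [→ Below.lt_of_singleton, → WordAvoids.not_lt]

lemma WordAvoids.pats231_of_cons (h : WordAvoids patsT (p :: E)) (hE : Below [p] E) :
    WordAvoids pats231 E := by
  rw [wordAvoids_pats231_iff]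
  rintro q r s hs ⟨hsq, hqr⟩
  have hps : p < s := hE.lt (by simp) (hs.subset (by simp))
  exact (h.not_patsT (hs.cons_cons p)).1 ⟨hps, hsq, hqr⟩

lemma WordAvoids.pats12_of_cons_cons (h : WordAvoids patsT (p :: q :: D)) (hD : Below D [p])
    (hpq : p < q) : WordAvoids pats12 D := by
  rw [wordAvoids_pats12_iff]
  intro r s hs hrs
  have hsp : s < p := hD.lt_of_singleton (hs.subset (by simp))
  exact (h.not_patsT ((hs.cons_cons q).cons_cons p)).2.2 ⟨hrs, hsp, hpq⟩

lemma WordAvoids.pats132_3412_of_append (h : WordAvoids patsT (B ++ [s])) (hB : Below [s] B) :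
    WordAvoids pats132_3412 B := by
  rw [wordAvoids_pats132_3412_iff]
  refine ⟨fun p q r hpqr hlt => ?_, fun p q r t hs => ?_⟩
  · have hsp : s < p := hB.lt (by simp) (hpqr.subset (by simp))
    exact (h.not_patsT (hpqr.append (List.Sublist.refl [s]))).2.1 ⟨hsp, hlt⟩
  · exact (h.not_patsT (hs.trans (List.sublist_append_left _ _))).2.2

lemma WordAvoids.pats12_of_append (h : WordAvoids patsT (B ++ [r, s])) (hB : Below [s] B)
    (hrs : r < s) : WordAvoids pats12 B := by
  rw [wordAvoids_pats12_iff]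
  intro p q hs hpq
  have hsp : s < p := hB.lt (by simp) (hs.subset (by simp))
  exact (h.not_patsT (hs.append (List.Sublist.refl [r, s]))).2.2 ⟨hrs, hsp, hpq⟩

lemma IsLayout.pats231_of_patsT (h : IsLayout B A D E n)
    (av : WordAvoids patsT (B ++ A ++ n :: (D ++ E))) (hBA : B ++ A ≠ []) :
    WordAvoids pats231 E := by
  obtain ⟨⟨-, -, hAE, -⟩, -, ⟨hBE, -⟩, -⟩ := h.below
  obtain ⟨x, hx⟩ := List.exists_mem_of_ne_nil _ hBA
  have hs : (x :: E).Sublist (B ++ A ++ n :: (D ++ E)) :=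
    .append (List.singleton_sublist.2 hx) (by simp)
  exact (av.sublist hs).pats231_of_cons (by grind [Below])

lemma IsLayout.pats12_of_patsT (h : IsLayout B A D E n)
    (av : WordAvoids patsT (B ++ A ++ n :: (D ++ E))) (hB : B ≠ []) : WordAvoids pats12 D := by
  obtain ⟨-, ⟨hDB, -, -⟩, ⟨-, hBn⟩, -⟩ := h.below
  obtain ⟨b, hb⟩ := List.exists_mem_of_ne_nil B hB
  have hs : (b :: n :: D).Sublist (B ++ A ++ n :: (D ++ E)) :=
    .append (l₁ := [b]) (by simp [hb]) (by simp)
  exact (av.sublist hs).pats12_of_cons_cons (by grind [Below]) (hBn.lt_of_singleton hb)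

lemma IsLayout.wordAvoids_patsT_iff (h : IsLayout B A D E n) :
    WordAvoids patsT (B ++ A ++ n :: (D ++ E)) ↔
      B = [] ∧ A = [] ∧ D = [] ∧ WordAvoids patsT E ∨
      B = [] ∧ (WordAvoids patsT A ∧ A ≠ []) ∧ D = [] ∧ WordAvoids pats231 E ∨
      (WordAvoids pats132_3412 B ∧ B ≠ []) ∧ A = [] ∧ (WordAvoids pats12 D ∧ D ≠ []) ∧
        WordAvoids pats231 E ∨
      (WordAvoids pats12 B ∧ B ≠ []) ∧ (WordAvoids patsT A ∧ A ≠ []) ∧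
        (WordAvoids pats12 D ∧ D ≠ []) ∧ WordAvoids pats231 E := by
  obtain ⟨⟨hAD, -, hAE, hAn⟩, ⟨hDB, -, -⟩, -, hEn⟩ := h.below
  constructor
  · intro av
    have avA : WordAvoids patsT A := av.sublist (by simp)
    by_cases hB : B = []
    · obtain rfl := hB
      obtain rfl := h.eq_nil_iff.1 rfl
      by_cases hA : A = []
      · obtain rfl := hA
        exact .inl ⟨rfl, rfl, rfl, av.sublist (List.sublist_cons_self n E)⟩
      · exact .inr (.inl ⟨rfl, ⟨avA, hA⟩, rfl, h.pats231_of_patsT av hA⟩)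
    · have hD := mt h.eq_nil_iff.2 hB
      have avD := h.pats12_of_patsT av hB
      have avE := h.pats231_of_patsT av (by simp [hB])
      obtain ⟨d, hd⟩ := List.exists_mem_of_ne_nil D hD
      have hdB : Below [d] B := by grind [Below]
      rcases A with _ | ⟨a, A⟩
      · have hs : (B ++ [d]).Sublist (B ++ [] ++ n :: (D ++ E)) := by simp [hd]
        exact .inr (.inr (.inl ⟨⟨(av.sublist hs).pats132_3412_of_append hdB, hB⟩, rfl, ⟨avD, hD⟩,
          avE⟩))
      · have hs : (B ++ [a, d]).Sublist (B ++ a :: A ++ n :: (D ++ E)) := by simp [hd]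
        have had : a < d := hAD.lt (by simp) hd
        exact .inr (.inr (.inr ⟨⟨(av.sublist hs).pats12_of_append hdB had, hB⟩, ⟨avA, by simp⟩,
          ⟨avD, hD⟩, avE⟩))
  · rintro (⟨rfl, rfl, rfl, avE⟩ | ⟨rfl, ⟨avA, -⟩, rfl, avE⟩ | ⟨⟨avB, -⟩, rfl, ⟨avD, -⟩, avE⟩ |
      ⟨⟨avB, -⟩, ⟨avA, -⟩, ⟨avD, -⟩, avE⟩)
    · exact wordAvoids_patsT_cons hEn avE
    · exact wordAvoids_patsT_append_cons hAn hEn hAE avA avE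
    · simpa using h.wordAvoids_patsT_of_pats132_3412 avB avD avE
    · exact h.wordAvoids_patsT_of_pats12 avB avA avD avE

lemma IsLayout.wordAvoids_pats132_3412_iff (h : IsLayout B A D E n) :
    WordAvoids pats132_3412 (B ++ A ++ n :: (D ++ E)) ↔
      B = [] ∧ A = [] ∧ D = [] ∧ WordAvoids pats132_3412 E ∨
      B = [] ∧ (WordAvoids pats132_3412 A ∧ A ≠ []) ∧ D = [] ∧ E = [] ∨
      (WordAvoids pats132_3412 B ∧ B ≠ []) ∧ A = [] ∧ (WordAvoids pats12 D ∧ D ≠ []) ∧ E = [] := by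
  obtain ⟨⟨hAD, -, hAE, hAn⟩, ⟨hDB, -, hDn⟩, ⟨hBE, hBn⟩, hEn⟩ := h.below
  constructor
  · intro av
    have nlt : ∀ x ∈ B ++ A, ∀ y ∈ D ++ E, ¬ x < y := fun x hx y hy hxy =>
      av.not_132 (.append (l₁ := [x]) (by simpa using hx) (by simpa using hy) : [x, n, y].Sublist _)
        ⟨hxy, by grind [Below]⟩
    have hE : B ++ A ≠ [] → E = [] := fun hBA => List.eq_nil_iff_forall_not_mem.2 fun y hy => by
      obtain ⟨x, hx⟩ := List.exists_mem_of_ne_nil _ hBA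
      exact nlt x hx y (by simp [hy]) (by grind [Below])
    by_cases hB : B = []
    · obtain rfl := hB
      obtain rfl := h.eq_nil_iff.1 rfl
      by_cases hA : A = []
      · obtain rfl := hA
        exact .inl ⟨rfl, rfl, rfl, av.sublist (List.sublist_cons_self n E)⟩
      · exact .inr (.inl ⟨rfl, ⟨av.sublist (by simp), hA⟩, rfl, hE hA⟩)
    · have hD := mt h.eq_nil_iff.2 hB
      obtain ⟨d, hd⟩ := List.exists_mem_of_ne_nil D hD
      have hA : A = [] := List.eq_nil_iff_forall_not_mem.2 fun x hx =>
        nlt x (by simp [hx]) d (by simp [hd]) (hAD.lt hx hd)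
      exact .inr (.inr ⟨⟨av.sublist (by simp), hB⟩, hA,
        ⟨h.pats12_of_patsT av.patsT_of_pats132_3412 hB, hD⟩, hE (by simp [hB])⟩)
  · rintro (⟨rfl, rfl, rfl, avE⟩ | ⟨rfl, ⟨avA, -⟩, rfl, rfl⟩ | ⟨⟨avB, -⟩, rfl, ⟨avD, -⟩, rfl⟩)
    · exact wordAvoids_pats132_3412_cons hEn avE
    · exact wordAvoids_pats132_3412_append_cons hAn hEn (by simp [Below]) avA
        (wordAvoids_nil nil_notMem_pats12)
    · simpa using wordAvoids_pats132_3412_append_cons hBn hDn hDB avB avD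

lemma IsLayout.wordAvoids_pats231_iff (h : IsLayout B A D E n) :
    WordAvoids pats231 (B ++ A ++ n :: (D ++ E)) ↔
      B = [] ∧ WordAvoids pats231 A ∧ D = [] ∧ WordAvoids pats231 E := by
  obtain ⟨⟨-, -, hAE, hAn⟩, ⟨hDB, -, -⟩, ⟨-, hBn⟩, hEn⟩ := h.below
  constructor
  · intro av
    have hB : B = [] := by
      by_contra hB
      obtain ⟨b, hb⟩ := List.exists_mem_of_ne_nil B hB
      obtain ⟨d, hd⟩ := List.exists_mem_of_ne_nil D (mt h.eq_nil_iff.2 hB)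
      exact av.not_231 (.append (l₁ := [b]) (by simp [hb]) (by simp [hd]) : [b, n, d].Sublist _)
        ⟨hDB.lt hd hb, hBn.lt_of_singleton hb⟩
    exact ⟨hB, av.sublist (by simp), h.eq_nil_iff.1 hB,
      av.sublist (.append (l₁ := []) (by simp) (by simp))⟩
  · rintro ⟨rfl, avA, rfl, avE⟩
    exact wordAvoids_pats231_append_cons hAn hEn hAE avA avE

lemma IsLayout.wordAvoids_pats12_iff (h : IsLayout B A D E n) :
    WordAvoids pats12 (B ++ A ++ n :: (D ++ E)) ↔
      B = [] ∧ A = [] ∧ D = [] ∧ WordAvoids pats12 E := by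
  obtain ⟨⟨-, -, -, hAn⟩, -, ⟨-, hBn⟩, hEn⟩ := h.below
  constructor
  · intro av
    have hBA : B ++ A = [] := List.eq_nil_iff_forall_not_mem.2 fun x hx =>
      av.not_lt (.append (l₁ := [x]) (by simpa using hx) (by simp) : [x, n].Sublist _)
        ((List.mem_append.1 hx).elim hBn.lt_of_singleton hAn.lt_of_singleton)
    obtain ⟨rfl, rfl⟩ := List.append_eq_nil_iff.1 hBA
    exact ⟨rfl, rfl, h.eq_nil_iff.1 rfl, av.sublist (by simp)⟩
  · rintro ⟨rfl, rfl, rfl, avE⟩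
    exact wordAvoids_pats12_cons hEn avE

/-- The letters of `L` that are greater than some letter of `R`. -/
def aboveSome (L R : List α) : List α := L.filter fun x => ∃ y ∈ R, y < x

/-- The letters of `R` that are smaller than some letter of `L`. -/
def belowSome (L R : List α) : List α := R.filter fun y => ∃ x ∈ L, y < x

lemma IsLayout.aboveSome_eq (h : IsLayout B A D E n) : aboveSome (B ++ A) (D ++ E) = B := by
  obtain ⟨⟨hAD, -, hAE, -⟩, ⟨hDB, -⟩, -⟩ := h.below
  have hB : ∀ x ∈ B, ∃ y ∈ D ++ E, y < x := fun x hx => by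
    obtain ⟨d, hd⟩ := List.exists_mem_of_ne_nil D (mt h.eq_nil_iff.2 (List.ne_nil_of_mem hx))
    exact ⟨d, by simp [hd], hDB.lt hd hx⟩
  have hA : ∀ x ∈ A, ¬ ∃ y ∈ D ++ E, y < x := by
    rintro x hx ⟨y, hy, hyx⟩
    exact hyx.asymm ((List.mem_append.1 hy).elim (hAD.lt hx) (hAE.lt hx))
  rw [aboveSome, List.filter_append, List.filter_eq_self.2 (by simpa using hB),
    List.filter_eq_nil_iff.2 (by simpa using hA), List.append_nil]

lemma IsLayout.belowSome_eq (h : IsLayout B A D E n) : belowSome (B ++ A) (D ++ E) = D := by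
  obtain ⟨⟨-, -, hAE, -⟩, ⟨hDB, -⟩, ⟨hBE, -⟩, -⟩ := h.below
  have hD : ∀ y ∈ D, ∃ x ∈ B ++ A, y < x := fun y hy => by
    obtain ⟨b, hb⟩ := List.exists_mem_of_ne_nil B (mt h.eq_nil_iff.1 (List.ne_nil_of_mem hy))
    exact ⟨b, by simp [hb], hDB.lt hy hb⟩
  have hE : ∀ y ∈ E, ¬ ∃ x ∈ B ++ A, y < x := by
    rintro y hy ⟨x, hx, hyx⟩
    exact hyx.asymm ((List.mem_append.1 hx).elim (hBE.lt · hy) (hAE.lt · hy))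
  rw [belowSome, List.filter_append, List.filter_eq_self.2 (by simpa using hD),
    List.filter_eq_nil_iff.2 (by simpa using hE), List.append_nil]

lemma IsLayout.unique {B' A' D' E' : List α} {n' : α} (h : IsLayout B A D E n)
    (h' : IsLayout B' A' D' E' n') (hL : B ++ A = B' ++ A') (hR : D ++ E = D' ++ E') :
    B = B' ∧ A = A' ∧ D = D' ∧ E = E' := by
  obtain rfl : B = B' := by rw [← h.aboveSome_eq, hL, hR, h'.aboveSome_eq]
  obtain rfl : D = D' := by rw [← h.belowSome_eq, hL, hR, h'.belowSome_eq]
  exact ⟨rfl, List.append_cancel_left hL, rfl, List.append_cancel_left hR⟩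

lemma mem_aboveSome : p ∈ aboveSome L R ↔ p ∈ L ∧ ∃ q ∈ R, q < p := by simp [aboveSome]

lemma mem_belowSome : q ∈ belowSome L R ↔ q ∈ R ∧ ∃ p ∈ L, q < p := by simp [belowSome]

lemma WordAvoids.not_1342_across (av : WordAvoids patsT (L ++ n :: R)) (hL : Below L [n])
    (hs : [p, q].Sublist L) (hr : r ∈ R) : ¬(p < r ∧ r < q) := fun hlt =>
  (av.not_patsT (hs.append ((List.singleton_sublist.2 hr).cons_cons n))).1
    ⟨hlt.1, hlt.2, hL.lt_of_singleton (hs.subset (by simp))⟩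

lemma WordAvoids.not_2431_across (av : WordAvoids patsT (L ++ n :: R)) (hR : Below R [n])
    (hp : p ∈ L) (hs : [q, r].Sublist R) : ¬(r < p ∧ p < q) := fun hlt =>
  (av.not_patsT ((List.singleton_sublist.2 hp).append (hs.cons_cons n))).2.1
    ⟨hlt.1, hlt.2, hR.lt_of_singleton (hs.subset (by simp))⟩

lemma WordAvoids.not_3412_across (av : WordAvoids patsT (L ++ n :: R)) (hL : Below L [n])
    (hp : p ∈ L) (hs : [q, r].Sublist R) : ¬(q < r ∧ r < p) := fun hlt =>
  (av.not_patsT ((List.singleton_sublist.2 hp).append (hs.cons_cons n))).2.2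
    ⟨hlt.1, hlt.2, hL.lt_of_singleton hp⟩

lemma WordAvoids.exists_left_eq_aboveSome_append (av : WordAvoids patsT (L ++ n :: R))
    (hL : Below L [n]) (hLR : L.Disjoint R) :
    ∃ A, L = aboveSome L R ++ A ∧ Below A R := by
  refine ⟨L.filter fun x => !decide (∃ y ∈ R, y < x),
    (filter_append_filter_not_eq_self ?_).symm, ?_⟩
  · refine List.pairwise_iff_forall_sublist.2 fun {u v} hs => ?_
    simp only [decide_eq_true_eq]
    rintro ⟨y, hy, hyv⟩
    by_contra! hu
    have huy : u ≠ y := fun e => hLR (hs.subset (by simp)) (e ▸ hy)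
    exact av.not_1342_across hL hs hy ⟨(hu y hy).lt_of_ne huy, hyv⟩
  · intro x hx y hy
    obtain ⟨hxL, hxR⟩ : x ∈ L ∧ ∀ y ∈ R, x ≤ y := by simpa using hx
    exact (hxR y hy).lt_of_ne fun e => hLR hxL (e ▸ hy)

lemma WordAvoids.exists_right_eq_belowSome_append (av : WordAvoids patsT (L ++ n :: R))
    (hR : Below R [n]) (hLR : L.Disjoint R) :
    ∃ E, R = belowSome L R ++ E ∧ Below L E := by
  refine ⟨R.filter fun y => !decide (∃ x ∈ L, y < x),
    (filter_append_filter_not_eq_self ?_).symm, ?_⟩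
  · refine List.pairwise_iff_forall_sublist.2 fun {u v} hs => ?_
    simp only [decide_eq_true_eq]
    rintro ⟨x, hx, hvx⟩
    by_contra! hu
    have hxu : x ≠ u := fun e => hLR hx (e ▸ hs.subset (by simp))
    exact av.not_2431_across hR hx hs ⟨hvx, (hu x hx).lt_of_ne hxu⟩
  · intro x hx y hy
    obtain ⟨hyR, hyL⟩ : y ∈ R ∧ ∀ x ∈ L, x ≤ y := by simpa using hy
    exact (hyL x hx).lt_of_ne fun e => hLR hx (e ▸ hyR)

lemma WordAvoids.belowSome_below_aboveSome (av : WordAvoids patsT (L ++ n :: R))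
    (hL : Below L [n]) (hR : Below R [n]) (hLR : L.Disjoint R) :
    Below (belowSome L R) (aboveSome L R) := by
  intro y hy x hx
  obtain ⟨hyR, x₀, hx₀, hyx₀⟩ := mem_belowSome.1 hy
  obtain ⟨hxL, y₀, hy₀, hy₀x⟩ := mem_aboveSome.1 hx
  by_contra! hxy
  have hxy : x < y := hxy.lt_of_ne fun e => hLR hxL (e ▸ hyR)
  rcases pair_sublist_or_pair_sublist hyR hy₀ (hy₀x.trans hxy).ne' with hs | hs
  · exact av.not_2431_across hR hxL hs ⟨hy₀x, hxy⟩
  · exact av.not_3412_across hL hx₀ hs ⟨hy₀x.trans hxy, hyx₀⟩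

lemma WordAvoids.exists_isLayout (av : WordAvoids patsT (L ++ n :: R)) (hL : Below L [n])
    (hR : Below R [n]) (hLR : L.Disjoint R) :
    ∃ B A D E, L = B ++ A ∧ R = D ++ E ∧ IsLayout B A D E n := by
  obtain ⟨A, hLA, hAR⟩ := av.exists_left_eq_aboveSome_append hL hLR
  obtain ⟨E, hRE, hLE⟩ := av.exists_right_eq_belowSome_append hR hLR
  have hDB := av.belowSome_below_aboveSome hL hR hLR
  have hA : A ⊆ L := hLA ▸ List.subset_append_right _ _
  have hE : E ⊆ R := hRE ▸ List.subset_append_right _ _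
  refine ⟨aboveSome L R, A, belowSome L R, E, hLA, hRE, ?_, ?_⟩
  · have hAB : Below A (aboveSome L R) := fun a ha b hb =>
      let ⟨_, y, hy, hyb⟩ := mem_aboveSome.1 hb
      (hAR.lt ha hy).trans hyb
    have hDE : Below (belowSome L R) E := fun d hd e he =>
      let ⟨_, x, hx, hdx⟩ := mem_belowSome.1 hd
      hdx.trans (hLE.lt hx he)
    have hAD : Below A (belowSome L R) := fun a ha d hd => hAR.lt ha (mem_belowSome.1 hd).1
    have hBE : Below (aboveSome L R) E := fun b hb e he => hLE.lt (mem_aboveSome.1 hb).1 he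
    have hAE : Below A E := fun a ha e he => hLE.lt (hA ha) he
    have hB : Below (aboveSome L R) [n] := hL.mono_left (List.filter_subset_self _)
    have hD : Below (belowSome L R) [n] := hR.mono_left (List.filter_subset_self _)
    simp [hAB, hDE, hAD, hBE, hAE, hDB, hL.mono_left hA, hR.mono_left hE, hB, hD]
  · simp only [List.eq_nil_iff_forall_not_mem, mem_aboveSome, mem_belowSome]
    grind

end Layouts

section PermutationWords

/-- The word `l` lists the natural numbers `k, k + 1, …, k + l.length - 1` in some order. For
`k = 0` these are the words of the permutations of `{0, …, l.length - 1}`. -/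
def ArrangesFrom (k : ℕ) (l : List ℕ) : Prop := l.Perm (List.range' k l.length)

variable {A B D E X Y l : List ℕ} {k n : ℕ}

lemma ArrangesFrom.mem_iff (h : ArrangesFrom k l) : n ∈ l ↔ k ≤ n ∧ n < k + l.length := by
  rw [List.Perm.mem_iff h, List.mem_range'_1]

lemma ArrangesFrom.nodup (h : ArrangesFrom k l) : l.Nodup :=
  h.nodup_iff.2 List.nodup_range'

lemma arrangesFrom_congr (h : X.Perm Y) : ArrangesFrom k X ↔ ArrangesFrom k Y := by
  rw [ArrangesFrom, ArrangesFrom, h.length_eq]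
  exact ⟨h.symm.trans, h.trans⟩

lemma arrangesFrom_singleton : ArrangesFrom k [n] ↔ n = k := by
  simp [ArrangesFrom]

lemma arrangesFrom_map_add : ArrangesFrom k (l.map (k + ·)) ↔ ArrangesFrom 0 l := by
  rw [ArrangesFrom, List.length_map, ← add_zero k, ← List.map_add_range', add_zero,
    List.map_perm_map_iff (add_right_injective k), ArrangesFrom]

lemma ArrangesFrom.exists_eq_map_add (h : ArrangesFrom k l) :
    ∃ w, ArrangesFrom 0 w ∧ l = w.map (k + ·) := by
  have hl : l = (l.map (· - k)).map (k + ·) := by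
    rw [List.map_map, List.map_congr_left (g := id), List.map_id]
    exact fun x hx => Nat.add_sub_cancel' (h.mem_iff.1 hx).1
  exact ⟨l.map (· - k), arrangesFrom_map_add.1 (hl ▸ h), hl⟩

lemma ArrangesFrom.of_append_of_below (h : ArrangesFrom k (X ++ Y)) (hXY : Below X Y) :
    ArrangesFrom k X ∧ ArrangesFrom (k + X.length) Y := by
  have hX := List.perm_insertionSort (· ≤ ·) X
  have hY := List.perm_insertionSort (· ≤ ·) Y
  have sorted : (X.insertionSort (· ≤ ·) ++ Y.insertionSort (· ≤ ·)).Pairwise (· ≤ ·) :=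
    List.pairwise_append.2 ⟨List.pairwise_insertionSort _ _, List.pairwise_insertionSort _ _,
      fun x hx y hy => (hXY.lt (hX.subset hx) (hY.subset hy)).le⟩
  have eq_range' := ((hX.append hY).trans h).eq_of_pairwise' sorted (List.pairwise_le_range' _)
  rw [List.length_append, ← List.range'_append_1] at eq_range'
  obtain ⟨eqX, eqY⟩ := List.append_inj eq_range' (by simp)
  exact ⟨hX.symm.trans (.of_eq eqX), hY.symm.trans (.of_eq eqY)⟩

lemma arrangesFrom_append_and_below_iff :
    ArrangesFrom k (X ++ Y) ∧ Below X Y ↔ ArrangesFrom k X ∧ ArrangesFrom (k + X.length) Y := by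
  refine ⟨fun h => h.1.of_append_of_below h.2, fun ⟨hX, hY⟩ => ⟨?_, fun x hx y hy => ?_⟩⟩
  · rw [ArrangesFrom, List.length_append, ← List.range'_append_1]
    exact hX.append hY
  · exact (hX.mem_iff.1 hx).2.trans_le (hY.mem_iff.1 hy).1

lemma arrangesFrom_blocks_and_pairwise_below_iff :
    ArrangesFrom 0 (B ++ A ++ n :: (D ++ E)) ∧ [A, D, B, E, [n]].Pairwise Below ↔
      ArrangesFrom 0 A ∧ ArrangesFrom A.length D ∧ ArrangesFrom (A.length + D.length) B ∧
        ArrangesFrom (A.length + D.length + B.length) E ∧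
          n = A.length + D.length + B.length + E.length := by
  have perm : (B ++ A ++ n :: (D ++ E)).Perm (A ++ (D ++ (B ++ (E ++ [n])))) := by
    grind
  have pairwise : [A, D, B, E, [n]].Pairwise Below ↔ Below A (D ++ (B ++ (E ++ [n]))) ∧
      Below D (B ++ (E ++ [n])) ∧ Below B (E ++ [n]) ∧ Below E [n] := by
    simp [below_append_right_iff, and_assoc]
  rw [arrangesFrom_congr perm, pairwise, ← and_assoc, arrangesFrom_append_and_below_iff, and_assoc,
    ← and_assoc (b := Below D _), arrangesFrom_append_and_below_iff, and_assoc,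
    ← and_assoc (b := Below B _), arrangesFrom_append_and_below_iff, and_assoc,
    arrangesFrom_append_and_below_iff, arrangesFrom_singleton, zero_add]

/-- The word `B ++ A ++ n :: (D ++ E)` obtained from permutations of initial segments by raising
the letters of `B`, `D` and `E` so that by value the blocks are stacked in the order
`A`, `D`, `B`, `E`, `n`. -/
def assembleWord (B A D E : List ℕ) : List ℕ :=
  B.map (A.length + D.length + ·) ++ A ++ (A.length + D.length + B.length + E.length) ::
    (D.map (A.length + ·) ++ E.map (A.length + D.length + B.length + ·))

lemma length_assembleWord :
    (assembleWord B A D E).length = B.length + (A.length + (D.length + E.length)) + 1 := by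
  simp only [assembleWord, List.length_append, List.length_cons, List.length_map]
  ring

lemma arrangesFrom_assembleWord_and_pairwise_below (hB : ArrangesFrom 0 B) (hA : ArrangesFrom 0 A)
    (hD : ArrangesFrom 0 D) (hE : ArrangesFrom 0 E) :
    ArrangesFrom 0 (assembleWord B A D E) ∧
      [A, D.map (A.length + ·), B.map (A.length + D.length + ·),
        E.map (A.length + D.length + B.length + ·),
        [A.length + D.length + B.length + E.length]].Pairwise Below := by
  rw [assembleWord, arrangesFrom_blocks_and_pairwise_below_iff]
  simp only [List.length_map, arrangesFrom_map_add, hB, hA, hD, hE, and_self]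

/-- The permutations of `{0, …, n - 1}`, for all `n` together, in one-line notation. -/
abbrev PermWord : Type := {l : List ℕ // ArrangesFrom 0 l}

/-- The empty permutation. -/
def PermWord.nil : PermWord := ⟨[], List.Perm.refl []⟩

lemma PermWord.val_eq_nil_iff {u : PermWord} : u.1 = [] ↔ u = PermWord.nil :=
  (Subtype.ext_iff (a2 := PermWord.nil)).symm

/-- The permutation with blocks `(B, A, D, E)`; see `assembleWord`. -/
def assemble (t : PermWord × PermWord × PermWord × PermWord) : PermWord :=
  ⟨assembleWord t.1 t.2.1 t.2.2.1 t.2.2.2,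
    (arrangesFrom_assembleWord_and_pairwise_below t.1.2 t.2.1.2 t.2.2.1.2 t.2.2.2.2).1⟩

/-- The quadruples `(B, A, D, E)` which are the blocks of a permutation in the sense of
`IsLayout`. -/
def layouts : Set (PermWord × PermWord × PermWord × PermWord) :=
  {(B, _, D, _) | B = PermWord.nil ↔ D = PermWord.nil}

lemma mem_layouts_iff {B A D E : PermWord} :
    (B, A, D, E) ∈ layouts ↔ (B = PermWord.nil ↔ D = PermWord.nil) := Iff.rfl

lemma isLayout_of_mem_layouts {B A D E : PermWord} (h : (B, A, D, E) ∈ layouts) :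
    IsLayout (B.1.map (A.1.length + D.1.length + ·)) A.1 (D.1.map (A.1.length + ·))
      (E.1.map (A.1.length + D.1.length + B.1.length + ·))
      (A.1.length + D.1.length + B.1.length + E.1.length) :=
  ⟨(arrangesFrom_assembleWord_and_pairwise_below B.2 A.2 D.2 E.2).2, by
    rw [List.map_eq_nil_iff, List.map_eq_nil_iff, PermWord.val_eq_nil_iff, PermWord.val_eq_nil_iff]
    exact h⟩

lemma injOn_assemble : Set.InjOn assemble layouts := by
  rintro ⟨B, A, D, E⟩ ht ⟨B', A', D', E'⟩ ht' heq
  have h := isLayout_of_mem_layouts ht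
  obtain ⟨⟨-, -, -, hAn⟩, ⟨-, -, hDn⟩, ⟨-, hBn⟩, hEn⟩ := h.below
  have heq : assembleWord B.1 A.1 D.1 E.1 = assembleWord B'.1 A'.1 D'.1 E'.1 :=
    congrArg Subtype.val heq
  have hlen := congrArg List.length heq
  simp only [length_assembleWord] at hlen
  have hn : A'.1.length + D'.1.length + B'.1.length + E'.1.length =
    A.1.length + D.1.length + B.1.length + E.1.length := by lia
  rw [assembleWord, assembleWord, hn, List.append_cons_inj_of_notMem] at heq
  · obtain ⟨eB, eA, eD, eE⟩ := h.unique (isLayout_of_mem_layouts ht') heq.1 heq.2.2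
    obtain rfl := Subtype.ext eA
    obtain rfl := Subtype.ext (List.map_injective_iff.2 (add_right_injective _) eD)
    obtain rfl := Subtype.ext (List.map_injective_iff.2 (add_right_injective _) eB)
    obtain rfl := Subtype.ext (List.map_injective_iff.2 (add_right_injective _) eE)
    rfl
  · exact fun hmem => (List.mem_append.1 hmem).elim
      (fun hm => (hBn.lt_of_singleton hm).false) (fun hm => (hAn.lt_of_singleton hm).false)
  · exact fun hmem => (List.mem_append.1 hmem).elim
      (fun hm => (hDn.lt_of_singleton hm).false) (fun hm => (hEn.lt_of_singleton hm).false)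

lemma ArrangesFrom.exists_eq_append_cons (h : ArrangesFrom 0 l) (hne : l ≠ []) :
    ∃ L n R, l = L ++ n :: R ∧ Below L [n] ∧ Below R [n] ∧ L.Disjoint R := by
  obtain ⟨n, hn⟩ : ∃ n, l.length = n + 1 := Nat.exists_eq_succ_of_ne_zero (by simpa using hne)
  obtain ⟨L, R, rfl⟩ := List.append_of_mem (h.mem_iff.2 (show 0 ≤ n ∧ n < 0 + l.length by lia))
  obtain ⟨hn_notMem, hLR⟩ := List.nodup_cons.1 (List.nodup_middle.1 h.nodup)
  have hlt : ∀ x ∈ L ++ R, x < n := fun x hx => by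
    have := (h.mem_iff.1 (List.perm_middle.mem_iff.2 (List.mem_cons_of_mem n hx))).2
    have : x ≠ n := fun e => hn_notMem (e ▸ hx)
    lia
  exact ⟨L, n, R, rfl, by simpa [Below] using fun x hx => hlt x (List.mem_append_left R hx),
    by simpa [Below] using fun x hx => hlt x (List.mem_append_right L hx),
    List.disjoint_of_nodup_append hLR⟩

lemma WordAvoids.exists_assemble_eq {u : PermWord} (av : WordAvoids patsT u.1)
    (hne : u ≠ PermWord.nil) : ∃ t ∈ layouts, assemble t = u := by
  rw [Ne, ← PermWord.val_eq_nil_iff] at hne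
  obtain ⟨u, hu⟩ := u
  obtain ⟨L, n, R, rfl, hL, hR, hLR⟩ := hu.exists_eq_append_cons hne
  obtain ⟨B, A, D, E, rfl, rfl, h⟩ := av.exists_isLayout hL hR hLR
  obtain ⟨hA, hD, hB, hE, rfl⟩ :=
    arrangesFrom_blocks_and_pairwise_below_iff.1 ⟨hu, h.pairwise_below⟩
  obtain ⟨B, permB, rfl⟩ := hB.exists_eq_map_add
  obtain ⟨D, permD, rfl⟩ := hD.exists_eq_map_add
  obtain ⟨E, permE, rfl⟩ := hE.exists_eq_map_add
  refine ⟨(⟨B, permB⟩, ⟨A, hA⟩, ⟨D, permD⟩, ⟨E, permE⟩), ?_, ?_⟩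
  · simpa [layouts, ← PermWord.val_eq_nil_iff] using h.eq_nil_iff
  · simp [assemble, assembleWord]

end PermutationWords

section GeneratingFunctions

/-- A combinatorial class: a type with a size function such that there are finitely many elements
of each size. -/
class CombClass (α : Type*) where
  /-- The size of an element. -/
  size : α → ℕ
  finite_size_eq (n : ℕ) : {x | size x = n}.Finite

open CombClass

/-- The product class, in which sizes are added. -/
instance {α β : Type*} [CombClass α] [CombClass β] : CombClass (α × β) where
  size p := size p.1 + size p.2
  finite_size_eq n := by
    have hα := (Set.finite_Iic n).biUnion fun i _ => finite_size_eq (α := α) i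
    have hβ := (Set.finite_Iic n).biUnion fun i _ => finite_size_eq (α := β) i
    refine (hα.prod hβ).subset ?_
    rintro ⟨x, y⟩ (rfl : size x + size y = n)
    simp

/-- Permutations are counted by their length. -/
instance : CombClass PermWord where
  size u := u.1.length
  finite_size_eq n := by
    refine ((List.range' 0 n).permutations.finite_toSet.preimage
      Subtype.val_injective.injOn).subset ?_
    rintro ⟨u, hu⟩ rfl
    exact List.mem_permutations.2 hu

variable {α β : Type*} [CombClass α] [CombClass β] {S S' : Set α}

/-- The generating function of a set of elements of a combinatorial class, by size. -/
noncomputable def genFun (S : Set α) : ℚ⟦X⟧ :=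
  PowerSeries.mk fun n => ({x ∈ S | size x = n}.ncard : ℚ)

lemma finite_sep_size_eq (S : Set α) (n : ℕ) : {x ∈ S | size x = n}.Finite :=
  (finite_size_eq n).subset fun _ hx => hx.2

lemma genFun_union (h : Disjoint S S') : genFun (S ∪ S') = genFun S + genFun S' := by
  ext n
  have hdisj : Disjoint {x ∈ S | size x = n} {x ∈ S' | size x = n} :=
    h.mono (Set.sep_subset _ _) (Set.sep_subset _ _)
  simp only [genFun, coeff_mk, map_add, Set.union_def, Set.mem_ofPred_eq, or_and_right]
  rw [Set.ofPred_or, Set.ncard_union_eq hdisj (finite_sep_size_eq S n) (finite_sep_size_eq S' n),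
    Nat.cast_add]

lemma genFun_singleton {a : α} (ha : size a = 0) : genFun {a} = 1 := by
  ext n
  rw [genFun, coeff_mk, coeff_one]
  split_ifs with hn
  · rw [show {x ∈ ({a} : Set α) | size x = n} = {a} by grind, Set.ncard_singleton, Nat.cast_one]
  · rw [show {x ∈ ({a} : Set α) | size x = n} = ∅ by grind, Set.ncard_empty, Nat.cast_zero]

lemma genFun_diff_singleton {a : α} (haS : a ∈ S) (ha : size a = 0) :
    genFun (S \ {a}) = genFun S - 1 := by
  rw [eq_sub_iff_add_eq, ← genFun_singleton ha, ← genFun_union Set.disjoint_sdiff_left,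
    Set.sdiff_union_of_subset (Set.singleton_subset_iff.2 haS)]

lemma genFun_image {f : α → β} (hf : Set.InjOn f S) (hsize : ∀ x ∈ S, size (f x) = size x + 1) :
    genFun (f '' S) = X * genFun S := by
  ext n
  cases n with
  | zero =>
    have hempty : {y ∈ f '' S | size y = 0} = ∅ := by grind
    rw [coeff_zero_X_mul, genFun, coeff_mk, hempty, Set.ncard_empty, Nat.cast_zero]
  | succ n =>
    have himage : {y ∈ f '' S | size y = n + 1} = f '' {x ∈ S | size x = n} := by grind
    rw [coeff_succ_X_mul, genFun, genFun, coeff_mk, coeff_mk, himage,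
      (hf.mono (Set.sep_subset _ _)).ncard_image]

lemma genFun_prod (S : Set α) (T : Set β) : genFun (S ×ˢ T) = genFun S * genFun T := by
  classical
  ext n
  let block (ij : ℕ × ℕ) : Finset (α × β) :=
    (finite_sep_size_eq S ij.1).toFinset ×ˢ (finite_sep_size_eq T ij.2).toFinset
  have fiber : {p ∈ S ×ˢ T | size p = n} =
      ((Finset.HasAntidiagonal.antidiagonal n).biUnion block : Finset (α × β)) := by
    ext ⟨x, y⟩
    change (x ∈ S ∧ y ∈ T) ∧ size x + size y = n ↔ _
    simp only [block, Finset.coe_biUnion, SetLike.mem_coe, Finset.HasAntidiagonal.mem_antidiagonal,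
      Finset.coe_product, Set.Finite.coe_toFinset, Set.mem_iUnion, Set.mem_prod, Set.mem_ofPred_eq,
      exists_prop, Prod.exists]
    grind
  have hdisj (I : Set (ℕ × ℕ)) : I.PairwiseDisjoint block := by
    intro ij _ ij' _ hne
    rw [Function.onFun, Finset.disjoint_left]
    rintro ⟨x, y⟩ h h'
    simp only [block, Finset.mem_product, Set.Finite.mem_toFinset] at h h'
    exact hne (Prod.ext (h.1.2.symm.trans h'.1.2) (h.2.2.symm.trans h'.2.2))
  rw [coeff_mul, genFun, coeff_mk, fiber, Set.ncard_coe_finset, Finset.card_biUnion (hdisj _),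
    Nat.cast_sum]
  refine Finset.sum_congr rfl fun ij _ => ?_
  rw [Finset.card_product, Nat.cast_mul, genFun, genFun, coeff_mk, coeff_mk,
    Set.ncard_eq_toFinset_card _ (finite_sep_size_eq S ij.1),
    Set.ncard_eq_toFinset_card _ (finite_sep_size_eq T ij.2)]

end GeneratingFunctions

section Enumeration

open CombClass PermWord

/-- The permutations that avoid every pattern in `P`. -/
def avClass (P : Set (List ℕ)) : Set PermWord := {u | WordAvoids P u.1}

variable {P : Set (List ℕ)}

lemma nil_mem_avClass (hP : [] ∉ P) : nil ∈ avClass P := wordAvoids_nil hP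

lemma genFun_singleton_nil : genFun {nil} = 1 := genFun_singleton rfl

lemma genFun_avClass_diff_nil (hP : [] ∉ P) :
    genFun (avClass P \ {nil}) = genFun (avClass P) - 1 :=
  genFun_diff_singleton (nil_mem_avClass hP) rfl

lemma avClass_eq_union_image_assemble (hP : [] ∉ P) (hsub : avClass P ⊆ avClass patsT) :
    avClass P = {nil} ∪ assemble '' {t ∈ layouts | assemble t ∈ avClass P} := by
  ext u
  constructor
  · intro hu
    by_cases hnil : u = nil
    · exact Or.inl hnil
    · obtain ⟨t, ht, rfl⟩ := (hsub hu).exists_assemble_eq hnil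
      exact Or.inr ⟨t, ⟨ht, hu⟩, rfl⟩
  · rintro (rfl | ⟨t, ht, rfl⟩)
    exacts [nil_mem_avClass hP, ht.2]

lemma genFun_avClass (hP : [] ∉ P) (hsub : avClass P ⊆ avClass patsT) :
    genFun (avClass P) = 1 + X * genFun {t ∈ layouts | assemble t ∈ avClass P} := by
  have size_assemble (t) : size (assemble t) = size t + 1 := length_assembleWord
  have hdisj : Disjoint {nil} (assemble '' {t ∈ layouts | assemble t ∈ avClass P}) := by
    rw [Set.disjoint_singleton_left]
    rintro ⟨t, -, ht⟩
    exact Nat.succ_ne_zero _ ((size_assemble t).symm.trans (congrArg size ht))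
  conv_lhs => rw [avClass_eq_union_image_assemble hP hsub]
  rw [genFun_union hdisj, genFun_singleton rfl,
    genFun_image (injOn_assemble.mono (Set.sep_subset _ _)) fun t _ => size_assemble t]

lemma wordAvoids_map_add_iff {l : List ℕ} (k : ℕ) : WordAvoids P (l.map (k + ·)) ↔ WordAvoids P l :=
  wordAvoids_map_iff add_right_strictMono

lemma layouts_sep_assemble_mem_avClass_eq {Q : Set (PermWord × PermWord × PermWord × PermWord)}
    (hQ : Q ⊆ layouts) (h : ∀ {B A D E}, (B, A, D, E) ∈ layouts →
      (WordAvoids P (assembleWord B.1 A.1 D.1 E.1) ↔ (B, A, D, E) ∈ Q)) :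
    {t ∈ layouts | assemble t ∈ avClass P} = Q :=
  Set.ext fun _ => ⟨fun ht => (h ht.1).1 ht.2, fun ht => ⟨hQ ht, (h (hQ ht)).2 ht⟩⟩

lemma layouts_sep_assemble_mem_avClass_pats12 :
    {t ∈ layouts | assemble t ∈ avClass pats12} =
      {nil} ×ˢ {nil} ×ˢ {nil} ×ˢ avClass pats12 :=
  layouts_sep_assemble_mem_avClass_eq
    (fun ⟨B, A, D, E⟩ h => by rw [mem_layouts_iff]; grind)
    fun ht => by simpa [avClass, assembleWord, wordAvoids_map_add_iff, val_eq_nil_iff] using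
      (isLayout_of_mem_layouts ht).wordAvoids_pats12_iff

lemma layouts_sep_assemble_mem_avClass_pats231 :
    {t ∈ layouts | assemble t ∈ avClass pats231} =
      {nil} ×ˢ avClass pats231 ×ˢ {nil} ×ˢ avClass pats231 :=
  layouts_sep_assemble_mem_avClass_eq
    (fun ⟨B, A, D, E⟩ h => by rw [mem_layouts_iff]; grind)
    fun ht => by simpa [avClass, assembleWord, wordAvoids_map_add_iff, val_eq_nil_iff] using
      (isLayout_of_mem_layouts ht).wordAvoids_pats231_iff

lemma layouts_sep_assemble_mem_avClass_pats132_3412 :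
    {t ∈ layouts | assemble t ∈ avClass pats132_3412} =
      {nil} ×ˢ {nil} ×ˢ {nil} ×ˢ avClass pats132_3412 ∪
      ({nil} ×ˢ (avClass pats132_3412 \ {nil}) ×ˢ {nil} ×ˢ {nil} ∪
      (avClass pats132_3412 \ {nil}) ×ˢ {nil} ×ˢ (avClass pats12 \ {nil}) ×ˢ {nil}) :=
  layouts_sep_assemble_mem_avClass_eq
    (fun ⟨B, A, D, E⟩ h => by rw [mem_layouts_iff]; grind)
    fun ht => by simpa [avClass, assembleWord, wordAvoids_map_add_iff, val_eq_nil_iff] using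
      (isLayout_of_mem_layouts ht).wordAvoids_pats132_3412_iff

lemma layouts_sep_assemble_mem_avClass_patsT :
    {t ∈ layouts | assemble t ∈ avClass patsT} =
      {nil} ×ˢ {nil} ×ˢ {nil} ×ˢ avClass patsT ∪
      ({nil} ×ˢ (avClass patsT \ {nil}) ×ˢ {nil} ×ˢ avClass pats231 ∪
      ((avClass pats132_3412 \ {nil}) ×ˢ {nil} ×ˢ (avClass pats12 \ {nil}) ×ˢ avClass pats231 ∪
      (avClass pats12 \ {nil}) ×ˢ (avClass patsT \ {nil}) ×ˢ (avClass pats12 \ {nil}) ×ˢ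
        avClass pats231)) :=
  layouts_sep_assemble_mem_avClass_eq
    (fun ⟨B, A, D, E⟩ h => by rw [mem_layouts_iff]; grind)
    fun ht => by simpa [avClass, assembleWord, wordAvoids_map_add_iff, val_eq_nil_iff] using
      (isLayout_of_mem_layouts ht).wordAvoids_patsT_iff

lemma genFun_avClass_pats12 :
    genFun (avClass pats12) = 1 + X * genFun (avClass pats12) := by
  nth_rw 1 [genFun_avClass nil_notMem_pats12 fun u hu => hu.patsT_of_pats12,
    layouts_sep_assemble_mem_avClass_pats12]
  simp only [genFun_prod, genFun_singleton_nil, one_mul]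

lemma genFun_avClass_pats231 :
    genFun (avClass pats231) = 1 + X * genFun (avClass pats231) ^ 2 := by
  nth_rw 1 [genFun_avClass nil_notMem_pats231 fun u hu => hu.patsT_of_pats231,
    layouts_sep_assemble_mem_avClass_pats231]
  simp only [genFun_prod, genFun_singleton_nil, one_mul, sq]

lemma genFun_avClass_pats132_3412 :
    genFun (avClass pats132_3412) = 1 + X * (genFun (avClass pats132_3412) +
      (genFun (avClass pats132_3412) - 1) +
      (genFun (avClass pats132_3412) - 1) * (genFun (avClass pats12) - 1)) := by
  nth_rw 1 [genFun_avClass nil_notMem_pats132_3412 fun u hu => hu.patsT_of_pats132_3412,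
    layouts_sep_assemble_mem_avClass_pats132_3412]
  rw [genFun_union, genFun_union]
  · simp only [genFun_prod, genFun_singleton_nil, one_mul, mul_one, add_assoc,
      genFun_avClass_diff_nil, nil_notMem_pats132_3412, nil_notMem_pats12, not_false_eq_true]
  all_goals rw [Set.disjoint_left]; grind

lemma genFun_avClass_patsT :
    genFun (avClass patsT) = 1 + X * (genFun (avClass patsT) +
      (genFun (avClass patsT) - 1) * genFun (avClass pats231) +
      (genFun (avClass pats132_3412) - 1) * (genFun (avClass pats12) - 1) *
        genFun (avClass pats231) +
      (genFun (avClass pats12) - 1) * (genFun (avClass patsT) - 1) *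
        (genFun (avClass pats12) - 1) * genFun (avClass pats231)) := by
  nth_rw 1 [genFun_avClass nil_notMem_patsT subset_rfl,
    layouts_sep_assemble_mem_avClass_patsT]
  rw [genFun_union, genFun_union, genFun_union]
  · simp only [genFun_prod, genFun_singleton_nil, one_mul, add_assoc, mul_assoc,
      genFun_avClass_diff_nil, nil_notMem_patsT, nil_notMem_pats132_3412, nil_notMem_pats12,
      not_false_eq_true]
  all_goals rw [Set.disjoint_left]; grind

end Enumeration

section OneLineNotation

open CombClass

/-- The word `f 0, f 1, …, f (n - 1)`. -/
def oneLine {n m : ℕ} (f : Fin n → Fin m) : List ℕ := List.ofFn fun i => (f i : ℕ)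

variable {k n m : ℕ}

lemma length_oneLine (f : Fin n → Fin m) : (oneLine f).length = n := List.length_ofFn

lemma ofFn_sublist_ofFn_iff {α : Type*} {u : Fin k → α} {v : Fin n → α} :
    (List.ofFn u).Sublist (List.ofFn v) ↔ ∃ f : Fin k ↪o Fin n, ∀ i, u i = v (f i) := by
  let castk := Fin.castOrderIso (List.length_ofFn (f := u))
  let castn := Fin.castOrderIso (List.length_ofFn (f := v))
  rw [List.sublist_iff_exists_fin_orderEmbedding_get_eq]
  constructor
  · rintro ⟨f, hf⟩
    refine ⟨castk.symm.toOrderEmbedding.trans (f.trans castn.toOrderEmbedding), fun i => ?_⟩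
    have := hf (castk.symm i)
    rwa [List.get_ofFn, List.get_ofFn] at this
  · rintro ⟨f, hf⟩
    refine ⟨castk.toOrderEmbedding.trans (f.trans castn.symm.toOrderEmbedding), fun i => ?_⟩
    rw [List.get_ofFn, List.get_ofFn]
    exact hf (castk i)

lemma wordContains_oneLine_iff (π : Equiv.Perm (Fin n)) (σ : Fin k → Fin k) :
    WordContains (oneLine σ) (oneLine π) ↔ ContainsPattern π σ := by
  simp only [WordContains, oneLine, List.map_ofFn, ofFn_sublist_ofFn_iff, List.mem_ofFn]
  constructor
  · rintro ⟨g, hg, f, hf⟩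
    refine ⟨f, fun a b => ?_⟩
    rw [Fin.lt_def, Fin.lt_def, ← hf, ← hf]
    exact (hg.lt_iff_lt ⟨a, rfl⟩ ⟨b, rfl⟩).symm
  · rintro ⟨f, hf⟩
    have factors : (fun i => (π (f i) : ℕ)).FactorsThrough fun i => (σ i : ℕ) := fun a b hab => by
      have hσ : σ a = σ b := Fin.ext hab
      have hlt : ¬π (f a) < π (f b) := fun h => ((hf a b).2 h).ne hσ
      have hgt : ¬π (f b) < π (f a) := fun h => ((hf b a).2 h).ne hσ.symm
      exact congrArg Fin.val (le_antisymm (not_lt.1 hgt) (not_lt.1 hlt))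
    have hg := factors.extend_apply (e' := 0)
    refine ⟨Function.extend (fun i => (σ i : ℕ)) (fun i => (π (f i) : ℕ)) 0, ?_, f, hg⟩
    rintro _ ⟨a, rfl⟩ _ ⟨b, rfl⟩ hab
    rw [hg, hg]
    exact (hf a b).1 hab

lemma wordAvoids_image_oneLine_iff (π : Equiv.Perm (Fin n)) (T : Set (Fin k → Fin k)) :
    WordAvoids (oneLine '' T) (oneLine π) ↔ ∀ σ ∈ T, ¬ ContainsPattern π σ := by
  simp only [WordAvoids, Set.forall_mem_image, wordContains_oneLine_iff]

lemma arrangesFrom_oneLine (π : Equiv.Perm (Fin n)) : ArrangesFrom 0 (oneLine π) := by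
  have hnodup : (oneLine π).Nodup :=
    List.nodup_ofFn.2 (Fin.val_injective.comp π.injective)
  refine (List.perm_ext_iff_of_nodup hnodup List.nodup_range').2 fun a => ?_
  rw [length_oneLine, List.mem_range'_1, oneLine, List.mem_ofFn]
  exact ⟨by rintro ⟨i, rfl⟩; simp, fun ha => ⟨π.symm ⟨a, by lia⟩, by simp⟩⟩

lemma ArrangesFrom.exists_oneLine_eq {l : List ℕ} (h : ArrangesFrom 0 l) :
    ∃ π : Equiv.Perm (Fin l.length), oneLine π = l := by
  have hlt (i : Fin l.length) : l.get i < l.length := by simpa using (h.mem_iff.1 (l.get_mem i)).2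
  have hinj : Function.Injective fun i => (⟨l.get i, hlt i⟩ : Fin l.length) := fun a b hab =>
    List.nodup_iff_injective_get.1 h.nodup (Fin.mk.inj hab)
  exact ⟨Equiv.ofBijective _ (Finite.injective_iff_bijective.1 hinj), by simp [oneLine]⟩

/-- The one-line notation of a permutation. -/
def toPermWord (π : Equiv.Perm (Fin n)) : PermWord := ⟨oneLine π, arrangesFrom_oneLine π⟩

lemma toPermWord_injective : Function.Injective (toPermWord (n := n)) := fun _ _ h =>
  Equiv.ext fun i => Fin.ext (congrFun (List.ofFn_injective (congrArg Subtype.val h)) i)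

lemma exists_toPermWord_eq {u : PermWord} (hu : size u = n) :
    ∃ π : Equiv.Perm (Fin n), toPermWord π = u := by
  subst hu
  obtain ⟨π, hπ⟩ := u.2.exists_oneLine_eq
  exact ⟨π, Subtype.ext hπ⟩

lemma avoiderGF_eq_genFun (T : Set (Fin 4 → Fin 4)) :
    avoiderGF T = genFun (avClass (oneLine '' T)) := by
  ext n
  have fiber : {u ∈ avClass (oneLine '' T) | size u = n} =
      toPermWord (n := n) '' {π | ∀ σ ∈ T, ¬ ContainsPattern π σ} := by
    ext u
    constructor
    · rintro ⟨hu, hsize⟩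
      obtain ⟨π, rfl⟩ := exists_toPermWord_eq hsize
      exact ⟨π, (wordAvoids_image_oneLine_iff π T).1 hu, rfl⟩
    · rintro ⟨π, hπ, rfl⟩
      exact ⟨(wordAvoids_image_oneLine_iff π T).2 hπ, length_oneLine π⟩
  rw [avoiderGF, genFun, coeff_mk, coeff_mk, fiber, toPermWord_injective.injOn.ncard_image]
  rfl

lemma image_oneLine_eq_patsT :
    oneLine '' ({![0,2,3,1], ![1,3,2,0], ![2,3,0,1]} : Set (Fin 4 → Fin 4)) = patsT := by
  simp [Set.image_insert_eq, patsT, oneLine]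

end OneLineNotation

section Solution

lemma catalanGF_eq : catalanGF = 1 + X * catalanGF ^ 2 := by
  have eq_map : catalanGF = PowerSeries.map (Nat.castRingHom ℚ) catalanSeries := by
    ext n
    simp [catalanGF]
  have := congrArg (PowerSeries.map (Nat.castRingHom ℚ)) catalanSeries_sq_mul_X_add_one
  rw [map_add, map_mul, map_pow, map_one, map_X, ← eq_map] at this
  linear_combination -this

lemma eq_of_eq_one_add_X_mul_sq {R : Type*} [CommRing R] [IsDomain R] {F G : R⟦X⟧}
    (hF : F = 1 + X * F ^ 2) (hG : G = 1 + X * G ^ 2) : F = G := by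
  have factored : (F - G) * (1 - X * (F + G)) = 0 := by linear_combination hF - hG
  refine sub_eq_zero.1 ((mul_eq_zero.1 factored).resolve_right fun h => ?_)
  simpa using congrArg constantCoeff h

lemma genFun_avClass_pats231_eq_catalanGF : genFun (avClass pats231) = catalanGF :=
  eq_of_eq_one_add_X_mul_sq genFun_avClass_pats231 catalanGF_eq

lemma one_sub_X_mul_genFun_avClass_pats12_sub_one :
    (1 - X) * (genFun (avClass pats12) - 1) = X := by
  linear_combination genFun_avClass_pats12

lemma genFun_avClass_pats132_3412_sub_one_mul :
    (genFun (avClass pats132_3412) - 1) * (1 - 3 * X + X ^ 2) = X * (1 - X) := by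
  linear_combination (1 - X) * genFun_avClass_pats132_3412 +
    X * (genFun (avClass pats132_3412) - 1) * one_sub_X_mul_genFun_avClass_pats12_sub_one

lemma genFun_avClass_patsT_sub_one_mul :
    (1 - 3 * X + X ^ 2) * (genFun (avClass patsT) - 1) *
        ((1 - X) ^ 3 - X * (1 - 2 * X + 2 * X ^ 2) * catalanGF) =
      X * (1 - X) ^ 2 * (1 - 3 * X + X ^ 2 + X ^ 2 * catalanGF) := by
  have hP := one_sub_X_mul_genFun_avClass_pats12_sub_one
  have hF := genFun_avClass_patsT
  rw [genFun_avClass_pats231_eq_catalanGF] at hF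
  set P := genFun (avClass pats12) - 1
  set K := genFun (avClass pats132_3412)
  set F := genFun (avClass patsT)
  have eliminate_P : (F - 1) * ((1 - X) ^ 3 - X * (1 - 2 * X + 2 * X ^ 2) * catalanGF) =
      X * (1 - X) ^ 2 + X ^ 2 * (1 - X) * (K - 1) * catalanGF := by
    linear_combination (1 - X) ^ 2 * hF +
      (X * (1 - X) * (K - 1) * catalanGF + X * (F - 1) * catalanGF * ((1 - X) * P + X)) * hP
  linear_combination (1 - 3 * X + X ^ 2) * eliminate_P +
    X ^ 2 * (1 - X) * catalanGF * genFun_avClass_pats132_3412_sub_one_mul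

-- The second factor is `x` times the conjugate of the first under `C ↦ 1 / x - C`, which swaps
-- the roots of `C = 1 + x * C ^ 2`.
lemma kernel_mul_conjugate {R : Type*} [CommRing R] {x C : R} (hC : C = 1 + x * C ^ 2) :
    ((1 - x) ^ 3 - x * (1 - 2 * x + 2 * x ^ 2) * C) *
        (x * (1 - x) ^ 3 - x * (1 - 2 * x + 2 * x ^ 2) + x ^ 2 * (1 - 2 * x + 2 * x ^ 2) * C) =
      x ^ 4 * (1 - x + x ^ 3) := by
  linear_combination (x * (1 - 2 * x + 2 * x ^ 2)) ^ 2 * hC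

end Solution

theorem statement_11 :
    (X : PowerSeries ℚ) * (1 - 3*X + X^2) * (1 - X + X^3) * avoiderGF ({![0,2,3,1], ![1,3,2,0], ![2,3,0,1]} : Set (Fin 4 → Fin 4)) =
      (1 - X)^2 * (1 - 4*X + 6*X^2 - 5*X^3 + X^4) * catalanGF
        - (1 - 6*X + 14*X^2 - 15*X^3 + 8*X^4 - X^5) := by
  rw [avoiderGF_eq_genFun, image_oneLine_eq_patsT]
  have hC := catalanGF_eq
  have hF := genFun_avClass_patsT_sub_one_mul
  set C := catalanGF
  set F := genFun (avClass patsT)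
  refine mul_left_cancel₀ (pow_ne_zero 3 X_ne_zero) ?_
  linear_combination
    (X * (1 - X) ^ 3 - X * (1 - 2 * X + 2 * X ^ 2) + X ^ 2 * (1 - 2 * X + 2 * X ^ 2) * C) * hF -
      (1 - 3 * X + X ^ 2) * (F - 1) * kernel_mul_conjugate hC -
        X ^ 4 * (1 - X) ^ 2 * (1 - 2 * X + 2 * X ^ 2) * hC
end

section
/- Let T = {3142, 2314, 1423} (patterns of length 4). Then the generating function for T-avoiders satisfies, as formal power series over ℚ, (1-x)·(1 - 8x + 22x^2 - 24x^3 + 8x^4 - x^5)·F_T(x) = (1-2x)·(1-3x+x^2)^2; that is, F_T(x) = (1-2x)(1-3x+x^2)^2/((1-x)(1-8x+22x^2-24x^3+8x^4-x^5)). -/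
open PowerSeries

/-!
Delete the maximum from a permutation: this makes the avoiders of `T` into a generating tree, the
children of `π` being the insertions of a new maximum into the *active* sites of `π`. The sites that
stay active are governed by where they lie relative to the maximum and by whether they are skew
cuts, i.e. whether all entries before the site exceed all entries after it. Recording the three
resulting numbers of active sites as a label `(k, r, p)` gives the succession rule

* `(1, 0, p) ↦ (1, 0, p + 1), (2, 0, 1), …, (p + 1, 0, 1)`,
* `(k, r, p) ↦ (1, 0, p + 1), (k, r + 1, p), (2, 1, 0), …, (k - 1, 1, 0), (2, 1, 0)^r, (2, 0, 1)^p`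
  for `k ≥ 2`,

with root `(1, 0, 1)`. The generating functions of the subtrees satisfy linear equations. Since
`u m = X * u (m + 1)` for all `m` forces `u = 0`, their differences in `r` and in `p` can be solved
for, and a finite linear system over `ℚ⟦X⟧` remains.
-/

open Equiv

section Patterns

theorem containsPattern_iff_strictMono {n k : ℕ} {π : Perm (Fin n)} {σ τ : Fin k → Fin k}
    (hl : Function.LeftInverse τ σ) (hr : Function.RightInverse τ σ) :
    ContainsPattern π σ ↔ ∃ f : Fin k ↪o Fin n, StrictMono (π ∘ f ∘ τ) := by
  refine exists_congr fun f => ⟨fun h a b hab => ?_, fun h a b => ?_⟩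
  · simpa [← h, hr a, hr b] using hab
  · simpa [hl a, hl b] using (h.lt_iff_lt (a := σ a) (b := σ b)).symm

theorem exists_orderEmbedding_fin_four_iff {α : Type*} [PartialOrder α] {P : (Fin 4 → α) → Prop} :
    (∃ f : Fin 4 ↪o α, P f) ↔ ∃ a b c d, a < b ∧ b < c ∧ c < d ∧ P ![a, b, c, d] := by
  constructor
  · rintro ⟨f, hf⟩
    refine ⟨f 0, f 1, f 2, f 3, f.strictMono (by decide), f.strictMono (by decide),
      f.strictMono (by decide), ?_⟩
    convert hf using 1
    ext x; fin_cases x <;> rfl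
  · rintro ⟨a, b, c, d, hab, hbc, hcd, hP⟩
    have hmono : StrictMono ![a, b, c, d] := by
      simp [Fin.strictMono_iff_lt_succ, Fin.forall_fin_succ, hab, hbc, hcd]
    exact ⟨OrderEmbedding.ofStrictMono _ hmono, hP⟩

theorem containsPattern_four_iff {n : ℕ} {π : Perm (Fin n)} {σ τ : Fin 4 → Fin 4}
    (hl : Function.LeftInverse τ σ) (hr : Function.RightInverse τ σ) :
    ContainsPattern π σ ↔ ∃ a b c d, a < b ∧ b < c ∧ c < d ∧
      (π (![a, b, c, d] (τ 0)) < π (![a, b, c, d] (τ 1)) ∧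
       π (![a, b, c, d] (τ 1)) < π (![a, b, c, d] (τ 2)) ∧
       π (![a, b, c, d] (τ 2)) < π (![a, b, c, d] (τ 3))) := by
  rw [containsPattern_iff_strictMono hl hr,
    exists_orderEmbedding_fin_four_iff (P := fun v => StrictMono (π ∘ v ∘ τ))]
  simp [Fin.strictMono_iff_lt_succ, Fin.forall_fin_succ]

end Patterns

section Avoider
variable {n : ℕ} {π : Perm (Fin n)}

/-- Avoidance of `3142`, `2314` and `1423`, in this order, spelled out on four positions. -/
def IsAvoider (π : Perm (Fin n)) : Prop :=
  ∀ a b c d : Fin n, a < b → b < c → c < d →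
    ¬(π b < π d ∧ π d < π a ∧ π a < π c) ∧
    ¬(π c < π a ∧ π a < π b ∧ π b < π d) ∧
    ¬(π a < π c ∧ π c < π d ∧ π d < π b)

instance : DecidablePred (IsAvoider (n := n)) := fun _ => by unfold IsAvoider; infer_instance

theorem forall_not_containsPattern_iff :
    (∀ σ ∈ ({![2,0,3,1], ![1,2,0,3], ![0,3,1,2]} : Set (Fin 4 → Fin 4)), ¬ContainsPattern π σ) ↔
      IsAvoider π := by
  have contains_3142 : ContainsPattern π ![2,0,3,1] ↔ ∃ a b c d, a < b ∧ b < c ∧ c < d ∧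
      π b < π d ∧ π d < π a ∧ π a < π c :=
    containsPattern_four_iff (τ := ![1,3,0,2]) (by decide) (by decide)
  have contains_2314 : ContainsPattern π ![1,2,0,3] ↔ ∃ a b c d, a < b ∧ b < c ∧ c < d ∧
      π c < π a ∧ π a < π b ∧ π b < π d :=
    containsPattern_four_iff (τ := ![2,0,1,3]) (by decide) (by decide)
  have contains_1423 : ContainsPattern π ![0,3,1,2] ↔ ∃ a b c d, a < b ∧ b < c ∧ c < d ∧
      π a < π c ∧ π c < π d ∧ π d < π b :=
    containsPattern_four_iff (τ := ![0,2,3,1]) (by decide) (by decide)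
  simp only [Set.mem_insert_iff, Set.mem_singleton_iff, forall_eq_or_imp, forall_eq,
    contains_3142, contains_2314, contains_1423, IsAvoider, not_exists]
  exact ⟨fun ⟨h₁, h₂, h₃⟩ a b c d hab hbc hcd =>
      ⟨fun h => h₁ a b c d ⟨hab, hbc, hcd, h⟩, fun h => h₂ a b c d ⟨hab, hbc, hcd, h⟩,
        fun h => h₃ a b c d ⟨hab, hbc, hcd, h⟩⟩,
    fun h => ⟨fun a b c d ⟨hab, hbc, hcd, h'⟩ => (h a b c d hab hbc hcd).1 h',
      fun a b c d ⟨hab, hbc, hcd, h'⟩ => (h a b c d hab hbc hcd).2.1 h',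
      fun a b c d ⟨hab, hbc, hcd, h'⟩ => (h a b c d hab hbc hcd).2.2 h'⟩⟩

theorem avoiderCount_eq_card (n : ℕ) :
    avoiderCount {![2,0,3,1], ![1,2,0,3], ![0,3,1,2]} n =
      Finset.card {π : Perm (Fin n) | IsAvoider π} := by
  simp only [avoiderCount, forall_not_containsPattern_iff, Nat.card_eq_fintype_card,
    Fintype.card_subtype]

end Avoider

section Insertion
variable {n : ℕ} {π : Perm (Fin n)} {i j : Fin (n + 1)}

/-- Insertion of a new maximum into `π` at site `i`, i.e. just before the entry at position `i`,
or at the end if `i = n`. -/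
def insertMax (i : Fin (n + 1)) (π : Perm (Fin n)) : Perm (Fin (n + 1)) :=
  (finSuccEquiv' i).trans ((optionCongr π).trans (finSuccEquiv' (Fin.last n)).symm)

@[simp]
theorem insertMax_self : insertMax i π i = Fin.last n := by
  simp [insertMax]

@[simp]
theorem insertMax_succAbove (x : Fin n) :
    insertMax i π (i.succAbove x) = (π x).castSucc := by
  simp [insertMax]

/-- The site `i` of `π` is active: a new maximum inserted there plays the `4` in no occurrence of
`3142`, `2314` or `1423`. The entries before the site are those at `x` with `x.castSucc < i`. -/
def IsActive (π : Perm (Fin n)) (i : Fin (n + 1)) : Prop :=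
  (∀ x y z : Fin n, x < y → y.castSucc < i → i ≤ z.castSucc → ¬(π y < π z ∧ π z < π x)) ∧
  (∀ x y z : Fin n, x < y → y < z → z.castSucc < i → ¬(π z < π x ∧ π x < π y)) ∧
  (∀ x y z : Fin n, x.castSucc < i → i ≤ y.castSucc → y < z → ¬(π x < π y ∧ π y < π z))

instance : DecidablePred (IsActive π) := fun _ =>
  @instDecidableAnd _ _ inferInstance (@instDecidableAnd _ _ inferInstance inferInstance)

/-- The entries before the site `j` all exceed the entries after it. -/
def IsSkewCut (π : Perm (Fin n)) (j : Fin (n + 1)) : Prop :=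
  ∀ x y : Fin n, x.castSucc < j → j ≤ y.castSucc → π y < π x

instance : DecidablePred (IsSkewCut π) := fun _ => by unfold IsSkewCut; infer_instance

/-- The site `j` is a skew cut of the prefix of `π` before the site `i`. This is what a site `j ≤ i`
needs to stay active when a new maximum is inserted at `i`. -/
def IsSkewCutBefore (π : Perm (Fin n)) (i j : Fin (n + 1)) : Prop :=
  ∀ x y : Fin n, x.castSucc < j → j ≤ y.castSucc → y.castSucc < i → π y < π x

instance : DecidablePred (IsSkewCutBefore π i) := fun _ => by
  unfold IsSkewCutBefore; infer_instance

/-- The entries between the sites `i` and `j` exceed all the entries outside. This is what a site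
`j ≥ i` needs to stay active when a new maximum is inserted at `i`. -/
def SegmentDominates (π : Perm (Fin n)) (i j : Fin (n + 1)) : Prop :=
  ∀ y : Fin n, i ≤ y.castSucc → y.castSucc < j →
    (∀ x : Fin n, x.castSucc < i → π x < π y) ∧ (∀ z : Fin n, j ≤ z.castSucc → π z < π y)

instance : DecidablePred (SegmentDominates π i) := fun _ => by
  unfold SegmentDominates; infer_instance

theorem IsSkewCutBefore.mono {i' : Fin (n + 1)} (hi : i ≤ i') (h : IsSkewCutBefore π i' j) :
    IsSkewCutBefore π i j :=
  fun x y hx hy hyi => h x y hx hy (hyi.trans_le hi)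

theorem IsSkewCut.isSkewCutBefore (hj : IsSkewCut π j) (i : Fin (n + 1)) :
    IsSkewCutBefore π i j :=
  fun x y hx hy _ => hj x y hx hy

theorem segmentDominates_self (π : Perm (Fin n)) (i : Fin (n + 1)) : SegmentDominates π i i :=
  fun _ h h' => absurd h h'.not_ge

theorem segmentDominates_zero_iff : SegmentDominates π 0 j ↔ IsSkewCut π j := by
  simp only [SegmentDominates, IsSkewCut, Fin.zero_le, Fin.not_lt_zero]
  grind

theorem isSkewCut_zero (π : Perm (Fin n)) : IsSkewCut π 0 := by
  simp [IsSkewCut]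

theorem isActive_zero (π : Perm (Fin n)) : IsActive π 0 := by
  simp [IsActive]

theorem isAvoider_insertMax_iff :
    IsAvoider (insertMax i π) ↔ IsAvoider π ∧ IsActive π i := by
  simp only [IsAvoider, IsActive, Fin.forall_iff_succAbove i, insertMax_self, insertMax_succAbove,
    Fin.succAbove_lt_succAbove_iff, Fin.castSucc_lt_castSucc_iff, Fin.lt_succAbove_iff_le_castSucc,
    Fin.succAbove_lt_iff_castSucc_lt, lt_irrefl, Fin.castSucc_lt_last,
    (Fin.castSucc_lt_last _).not_gt, false_and, and_false, true_and, and_true, not_false_eq_true,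
    false_imp_iff, imp_true_iff]
  grind

theorem succAbove_lt_iff_castSucc_lt_of_le (hji : j ≤ i) {x : Fin n} :
    i.succAbove x < j ↔ x.castSucc < j := by
  grind [Fin.succAbove]

theorem castSucc_succAbove_lt_succ_iff_of_le (hij : i ≤ j) {x : Fin n} :
    (i.succAbove x).castSucc < j.succ ↔ x.castSucc < j := by
  grind [Fin.succAbove]

-- A maximum after the site `j` can only be the `z` of the third condition for `j` to be active.
theorem isActive_insertMax_castSucc_iff (hji : j ≤ i) :
    IsActive (insertMax i π) j.castSucc ↔ IsActive π j ∧ IsSkewCutBefore π i j := by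
  have hinj := π.injective
  simp only [IsActive, IsSkewCutBefore, Fin.forall_iff_succAbove i, insertMax_self,
    insertMax_succAbove, Fin.succAbove_lt_succAbove_iff, Fin.castSucc_lt_castSucc_iff,
    Fin.lt_succAbove_iff_le_castSucc, Fin.succAbove_lt_iff_castSucc_lt, lt_irrefl,
    Fin.castSucc_lt_last, (Fin.castSucc_lt_last _).not_gt, false_and, and_false, true_and,
    and_true, not_false_eq_true, false_imp_iff, imp_true_iff, ← not_lt,
    succAbove_lt_iff_castSucc_lt_of_le hji]
  grind

-- A maximum before the site can only be the `x` of the first or the `y` of the second condition.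
theorem isActive_insertMax_succ_iff (hij : i ≤ j) :
    IsActive (insertMax i π) j.succ ↔ IsActive π j ∧ SegmentDominates π i j := by
  have hinj := π.injective
  simp only [IsActive, SegmentDominates, Fin.forall_iff_succAbove i, insertMax_self,
    insertMax_succAbove, Fin.succAbove_lt_succAbove_iff, Fin.castSucc_lt_castSucc_iff,
    Fin.lt_succAbove_iff_le_castSucc, Fin.succAbove_lt_iff_castSucc_lt, lt_irrefl,
    Fin.castSucc_lt_last, (Fin.castSucc_lt_last _).not_gt, false_and, and_false, true_and,
    and_true, not_false_eq_true, false_imp_iff, imp_true_iff, ← not_lt,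
    castSucc_succAbove_lt_succ_iff_of_le hij]
  grind

theorem isSkewCut_insertMax_succ_iff (hij : i ≤ j) :
    IsSkewCut (insertMax i π) j.succ ↔ IsSkewCut π j := by
  simp only [IsSkewCut, Fin.forall_iff_succAbove i, insertMax_self, insertMax_succAbove,
    Fin.castSucc_lt_castSucc_iff, Fin.castSucc_lt_last, imp_true_iff, ← not_lt,
    castSucc_succAbove_lt_succ_iff_of_le hij]
  grind

end Insertion

section ActiveSites
variable {n : ℕ}

/-- The active sites of `π`. -/
def activeSites (π : Perm (Fin n)) : Finset (Fin (n + 1)) := {i | IsActive π i}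

/-- The position of the maximum. -/
def maxPos (π : Perm (Fin (n + 1))) : Fin (n + 1) := π.symm (Fin.last n)

@[simp]
theorem mem_activeSites {π : Perm (Fin n)} {i : Fin (n + 1)} :
    i ∈ activeSites π ↔ IsActive π i := by
  simp [activeSites]

@[simp]
theorem maxPos_insertMax (π : Perm (Fin n)) (i : Fin (n + 1)) : maxPos (insertMax i π) = i := by
  simp [maxPos, Equiv.symm_apply_eq]

variable {π : Perm (Fin (n + 1))} {i j : Fin (n + 2)}

theorem apply_lt_apply_maxPos {x : Fin (n + 1)} (hx : x ≠ maxPos π) : π x < π (maxPos π) := by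
  simpa [maxPos, Fin.lt_last_iff_ne_last, ← Equiv.eq_symm_apply] using hx

theorem IsAvoider.isActive_castSucc_maxPos (hπ : IsAvoider π) :
    IsActive π (maxPos π).castSucc := by
  have hmax {x : Fin (n + 1)} (hx : x ≠ maxPos π) : π x < π (maxPos π) := apply_lt_apply_maxPos hx
  refine ⟨?_, ?_, ?_⟩
  · rintro x y z hxy hy hz ⟨hyz, hzx⟩
    rcases hz.eq_or_lt with h | h
    · grind
    · exact (hπ x y (maxPos π) z hxy (by simpa using hy) (by simpa using h)).1
        ⟨hyz, hzx, hmax (by grind)⟩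
  · rintro x y z hxy hyz hz ⟨hzx, hxy'⟩
    exact (hπ x y z (maxPos π) hxy hyz (by simpa using hz)).2.1 ⟨hzx, hxy', hmax (by grind)⟩
  · rintro x y z hx hy hyz ⟨hxy, hyz'⟩
    rcases hy.eq_or_lt with h | h
    · grind
    · exact (hπ x (maxPos π) y z (by simpa using hx) (by simpa using h) hyz).2.2
        ⟨hxy, hyz', hmax (by grind)⟩

theorem IsActive.isSkewCutBefore_maxPos (hj : IsActive π j) :
    IsSkewCutBefore π (maxPos π).castSucc j := by
  intro x y hx hy hyq
  have hyq : y < maxPos π := by simpa using hyq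
  have hxy : x ≠ y := by grind
  refine (lt_or_gt_of_ne (π.injective.ne hxy)).resolve_left fun h => ?_
  exact hj.2.2 x y (maxPos π) hx hy hyq ⟨h, apply_lt_apply_maxPos hyq.ne⟩

theorem IsActive.segmentDominates_maxPos (hj : IsActive π j) :
    SegmentDominates π (maxPos π).castSucc j := by
  have hmax {x : Fin (n + 1)} (hx : x ≠ maxPos π) : π x < π (maxPos π) := apply_lt_apply_maxPos hx
  intro y hqy hyj
  rcases (Fin.castSucc_le_castSucc_iff.1 hqy).eq_or_lt with rfl | hqy
  · exact ⟨fun x hx => hmax (by grind), fun z hz => hmax (by grind)⟩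
  refine ⟨fun x hx => ?_, fun z hz => ?_⟩
  · have hxq : x < maxPos π := by simpa using hx
    refine (lt_or_gt_of_ne (π.injective.ne (by grind))).resolve_right fun h => ?_
    exact hj.2.1 x (maxPos π) y hxq hqy hyj ⟨h, hmax hxq.ne⟩
  · have hqz : maxPos π < z := hqy.trans (by grind)
    refine (lt_or_gt_of_ne (π.injective.ne (by grind))).resolve_right fun h => ?_
    exact hj.1 (maxPos π) y z hqy hyj hz ⟨h, hmax hqz.ne'⟩

end ActiveSites

section Label
open Finset

/-- A node label `(k, r, p)` of the generating tree. For a permutation, `left` counts the active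
sites before the maximum, `skew` those active sites after it that are skew cuts, and `right` the
other active sites after it. -/
@[ext]
structure Label where
  left : ℕ
  right : ℕ
  skew : ℕ

variable {n : ℕ}

/-- The label of a permutation; the site just before the maximum counts for `left`. -/
def label (π : Perm (Fin (n + 1))) : Label where
  left := #{i ∈ activeSites π | i ≤ (maxPos π).castSucc}
  right := #{i ∈ activeSites π | (maxPos π).castSucc < i ∧ ¬IsSkewCut π i}
  skew := #{i ∈ activeSites π | (maxPos π).castSucc < i ∧ IsSkewCut π i}

section Child
variable {π : Perm (Fin n)} {i : Fin (n + 1)}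

theorem left_label_insertMax : (label (insertMax i π)).left =
    #{j ∈ activeSites π | j ≤ i ∧ IsSkewCutBefore π i j} := by
  simp only [label, maxPos_insertMax]
  rw [eq_comm, ← card_map Fin.castSuccEmb]
  congr 1
  ext j
  cases j using Fin.lastCases with
  | last => simp [Fin.castSucc_ne_last]
  | cast j =>
    simp only [mem_map, mem_filter, mem_activeSites, Fin.castSuccEmb_apply,
      Fin.castSucc_inj, exists_eq_right, Fin.castSucc_le_castSucc_iff]
    grind [isActive_insertMax_castSucc_iff]

theorem card_filter_activeSites_insertMax {P : Fin (n + 2) → Prop} [DecidablePred P]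
    {Q : Fin (n + 1) → Prop} [DecidablePred Q] (hPQ : ∀ j, i ≤ j → (P j.succ ↔ Q j)) :
    #{j ∈ activeSites (insertMax i π) | i.castSucc < j ∧ P j} =
      #{j ∈ activeSites π | i ≤ j ∧ SegmentDominates π i j ∧ Q j} := by
  rw [eq_comm, ← card_map (Fin.succEmb _)]
  congr 1
  ext j
  cases j using Fin.cases with
  | zero => simp [Fin.succ_ne_zero]
  | succ j =>
    simp only [mem_map, mem_filter, mem_activeSites, Fin.coe_succEmb,
      Fin.succ_inj, exists_eq_right, Fin.castSucc_lt_succ_iff]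
    grind [isActive_insertMax_succ_iff]

theorem right_label_insertMax : (label (insertMax i π)).right =
    #{j ∈ activeSites π | i ≤ j ∧ SegmentDominates π i j ∧ ¬IsSkewCut π j} := by
  simp only [label, maxPos_insertMax]
  exact card_filter_activeSites_insertMax fun j hj => (isSkewCut_insertMax_succ_iff hj).not

theorem skew_label_insertMax : (label (insertMax i π)).skew =
    #{j ∈ activeSites π | i ≤ j ∧ SegmentDominates π i j ∧ IsSkewCut π j} := by
  simp only [label, maxPos_insertMax]
  exact card_filter_activeSites_insertMax fun j hj => isSkewCut_insertMax_succ_iff hj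

end Child

variable {π : Perm (Fin (n + 1))} {i j : Fin (n + 2)}

theorem not_isSkewCut_of_le_maxPos (hi : 0 < i) (hiq : i ≤ (maxPos π).castSucc) :
    ¬IsSkewCut π i := fun h => by
  have hlt := h 0 (maxPos π) (by simpa using hi) hiq
  have hq : (0 : Fin (n + 1)) ≠ maxPos π := by grind
  exact hlt.not_gt (apply_lt_apply_maxPos hq)

theorem IsActive.isSkewCut_of_maxPos_eq_zero (hj : IsActive π j) (hq : maxPos π = 0) :
    IsSkewCut π j := by
  simpa [hq, segmentDominates_zero_iff] using hj.segmentDominates_maxPos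

theorem IsActive.not_segmentDominates (hi : IsActive π i) (hi0 : 0 < i)
    (hiq : i ≠ (maxPos π).castSucc) (hij : i < j) : ¬SegmentDominates π i j := fun h => by
  obtain ⟨y, rfl⟩ := Fin.exists_castSucc_eq.2 (hij.trans_le (Fin.le_last j)).ne
  have hdom := (h y le_rfl hij).1
  rcases hiq.lt_or_gt with hlt | hgt
  · exact (hdom 0 (by simpa using hi0)).not_gt
      (hi.isSkewCutBefore_maxPos 0 y (by simpa using hi0) le_rfl hlt)
  · exact (hdom _ hgt).not_gt (apply_lt_apply_maxPos (by grind))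

end Label

section Succession
open Finset

variable {n : ℕ} {π : Perm (Fin (n + 1))} {i : Fin (n + 2)}

theorem left_label_insertMax_of_forall (h : ∀ j, IsActive π j → j ≤ i → IsSkewCutBefore π i j) :
    (label (insertMax i π)).left = #{j ∈ activeSites π | j ≤ i} := by
  rw [left_label_insertMax]
  congr 1
  ext j
  grind [mem_activeSites]

theorem left_label_insertMax_of_le_maxPos (hiq : i ≤ (maxPos π).castSucc) :
    (label (insertMax i π)).left = #{j ∈ activeSites π | j ≤ i} :=
  left_label_insertMax_of_forall fun _ hj _ => hj.isSkewCutBefore_maxPos.mono hiq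

theorem left_label_insertMax_of_maxPos_lt (hi : IsActive π i) (hq : 0 < maxPos π)
    (hqi : (maxPos π).castSucc < i) : (label (insertMax i π)).left = 2 := by
  rw [left_label_insertMax, card_eq_two]
  refine ⟨0, i, by grind, ?_⟩
  ext j
  simp only [mem_filter, mem_activeSites, mem_insert, mem_singleton]
  refine ⟨fun ⟨hj, hji, hcut⟩ => ?_, ?_⟩
  · by_contra! hne
    have hj0 : Fin.castSucc 0 < j := by simpa [Fin.pos_iff_ne_zero] using hne.1
    have hji : j < i := hji.lt_of_ne hne.2
    by_cases hjq : j ≤ (maxPos π).castSucc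
    · exact (hcut 0 (maxPos π) hj0 hjq hqi).not_gt (apply_lt_apply_maxPos hq.ne)
    · obtain ⟨y, rfl⟩ := Fin.exists_castSucc_eq.2 (hji.trans_le (Fin.le_last i)).ne
      exact (hcut 0 y hj0 le_rfl hji).not_gt
        ((hi.segmentDominates_maxPos y (not_le.1 hjq).le hji).1 0 (by simpa using hq))
  · rintro (rfl | rfl)
    · exact ⟨isActive_zero π, Fin.zero_le _, fun x y hx => by simp at hx⟩
    · exact ⟨hi, le_rfl, fun x y _ hy hy' => absurd hy hy'.not_ge⟩

theorem filter_segmentDominates_eq (hi : IsActive π i) (hi0 : 0 < i)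
    (hiq : i ≠ (maxPos π).castSucc) (P : Fin (n + 2) → Prop) [DecidablePred P] :
    ({j ∈ activeSites π | i ≤ j ∧ SegmentDominates π i j ∧ P j} : Finset _) =
      if P i then {i} else ∅ := by
  ext j
  have hself := segmentDominates_self π i
  have hgt : i < j → ¬SegmentDominates π i j := hi.not_segmentDominates hi0 hiq
  split_ifs <;> grind [mem_activeSites]

theorem label_insertMax_zero (π : Perm (Fin (n + 1))) :
    label (insertMax 0 π) = ⟨1, 0, (label π).skew + 1⟩ := by
  have hskew : ({j ∈ activeSites π | 0 ≤ j ∧ IsSkewCut π j ∧ IsSkewCut π j} : Finset _) =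
      insert 0 {j ∈ activeSites π | (maxPos π).castSucc < j ∧ IsSkewCut π j} := by
    ext j
    have hle := not_isSkewCut_of_le_maxPos (π := π) (i := j)
    grind [mem_activeSites, isActive_zero, isSkewCut_zero]
  ext
  · rw [left_label_insertMax_of_le_maxPos (Fin.zero_le _), card_eq_one]
    exact ⟨0, by ext j; grind [mem_activeSites, isActive_zero]⟩
  · simp [right_label_insertMax, segmentDominates_zero_iff]
  · simp only [skew_label_insertMax, segmentDominates_zero_iff, hskew]
    exact card_insert_of_notMem (by simp)

theorem IsAvoider.label_insertMax_maxPos (hπ : IsAvoider π) (hq : 0 < maxPos π) :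
    label (insertMax (maxPos π).castSucc π) =
      ⟨(label π).left, (label π).right + 1, (label π).skew⟩ := by
  have hact := hπ.isActive_castSucc_maxPos
  have hq' : 0 < (maxPos π).castSucc := by simpa
  have hcut := not_isSkewCut_of_le_maxPos hq' le_rfl
  have hdom : ∀ j, IsActive π j → SegmentDominates π (maxPos π).castSucc j :=
    fun j hj => hj.segmentDominates_maxPos
  ext
  · exact left_label_insertMax_of_le_maxPos le_rfl
  · rw [right_label_insertMax]
    simp only [label]
    rw [← card_insert_of_notMem (a := (maxPos π).castSucc) (by simp)]
    congr 1
    ext j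
    grind [mem_activeSites]
  · rw [skew_label_insertMax]
    simp only [label]
    congr 1
    ext j
    grind [mem_activeSites]

theorem IsActive.label_insertMax_of_lt_maxPos (hi : IsActive π i) (hi0 : 0 < i)
    (hiq : i < (maxPos π).castSucc) :
    label (insertMax i π) = ⟨#{j ∈ activeSites π | j ≤ i}, 1, 0⟩ := by
  have hcut := not_isSkewCut_of_le_maxPos hi0 hiq.le
  ext
  · exact left_label_insertMax_of_le_maxPos hiq.le
  · simp [right_label_insertMax, filter_segmentDominates_eq hi hi0 hiq.ne, hcut]
  · simp [skew_label_insertMax, filter_segmentDominates_eq hi hi0 hiq.ne, hcut]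

theorem IsActive.label_insertMax_of_maxPos_lt (hi : IsActive π i) (hq : 0 < maxPos π)
    (hqi : (maxPos π).castSucc < i) :
    label (insertMax i π) = if IsSkewCut π i then ⟨2, 0, 1⟩ else ⟨2, 1, 0⟩ := by
  have hi0 : 0 < i := (Fin.zero_le _).trans_lt hqi
  ext
  · rw [left_label_insertMax_of_maxPos_lt hi hq hqi]; split_ifs <;> rfl
  · rw [right_label_insertMax, filter_segmentDominates_eq hi hi0 hqi.ne']; split_ifs <;> simp
  · rw [skew_label_insertMax, filter_segmentDominates_eq hi hi0 hqi.ne']; split_ifs <;> simp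

theorem IsActive.label_insertMax_of_maxPos_eq_zero (hi : IsActive π i) (hi0 : 0 < i)
    (hq : maxPos π = 0) : label (insertMax i π) = ⟨#{j ∈ activeSites π | j ≤ i}, 0, 1⟩ := by
  have hiq : i ≠ (maxPos π).castSucc := by simpa [hq] using hi0.ne'
  have hcut := hi.isSkewCut_of_maxPos_eq_zero hq
  ext
  · exact left_label_insertMax_of_forall
      fun j hj _ => (hj.isSkewCut_of_maxPos_eq_zero hq).isSkewCutBefore i
  · simp [right_label_insertMax, filter_segmentDominates_eq hi hi0 hiq, hcut]
  · simp [skew_label_insertMax, filter_segmentDominates_eq hi hi0 hiq, hcut]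

end Succession

section Offspring
open Finset

/-- The succession rule: the labels of the children of a node with label `ℓ`. The first case is
meant for the labels `(1, 0, p)`, where the maximum comes first. -/
def offspring (ℓ : Label) : Multiset Label :=
  if ℓ.left ≤ 1 then
    ⟨1, 0, ℓ.skew + 1⟩ ::ₘ (Multiset.range ℓ.skew).map fun t => ⟨t + 2, 0, 1⟩
  else
    ⟨1, 0, ℓ.skew + 1⟩ ::ₘ ⟨ℓ.left, ℓ.right + 1, ℓ.skew⟩ ::ₘ
      ((Multiset.range (ℓ.left - 2)).map (fun t => ⟨t + 2, 1, 0⟩) +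
        Multiset.replicate ℓ.right ⟨2, 1, 0⟩ + Multiset.replicate ℓ.skew ⟨2, 0, 1⟩)

theorem map_card_filter_le {α : Type*} [LinearOrder α] (S : Finset α) :
    S.val.map (fun i => #{j ∈ S | j ≤ i}) = (Multiset.range #S).map (· + 1) := by
  induction S using Finset.induction_on_max with
  | empty => rfl
  | insert a S hS ih =>
    have ha : a ∉ S := fun h => (hS a h).false
    have hrank_a : #{j ∈ insert a S | j ≤ a} = #S + 1 := by
      rw [filter_true_of_mem, card_insert_of_notMem ha]
      grind
    have hrank : ∀ i ∈ S.val, #{j ∈ insert a S | j ≤ i} = #{j ∈ S | j ≤ i} := fun i hi => by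
      rw [filter_insert, if_neg (hS i hi).not_ge]
    rw [insert_val_of_notMem ha, Multiset.map_cons, hrank_a, Multiset.map_congr rfl hrank, ih,
      card_insert_of_notMem ha, Multiset.range_succ, Multiset.map_cons]

variable {n : ℕ} {π : Perm (Fin (n + 1))}

theorem label_of_maxPos_eq_zero (hq : maxPos π = 0) :
    label π = ⟨1, 0, #{i ∈ activeSites π | 0 < i}⟩ := by
  have hskew : ∀ j, IsActive π j → IsSkewCut π j := fun j hj => hj.isSkewCut_of_maxPos_eq_zero hq
  ext
  · simp only [label, hq, card_eq_one]
    exact ⟨0, by ext j; grind [mem_activeSites, isActive_zero]⟩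
  · simp only [label, card_eq_zero]
    ext j; grind [mem_activeSites]
  · simp only [label, hq]
    congr 1
    ext j; grind [mem_activeSites]

theorem IsAvoider.left_label_of_maxPos_pos (hπ : IsAvoider π) (hq : 0 < maxPos π) :
    (label π).left = #{i ∈ activeSites π | 0 < i ∧ i < (maxPos π).castSucc} + 2 := by
  have h : ({i ∈ activeSites π | i ≤ (maxPos π).castSucc} : Finset _) =
      insert 0 (insert (maxPos π).castSucc
        {i ∈ activeSites π | 0 < i ∧ i < (maxPos π).castSucc}) := by
    ext j
    have := hπ.isActive_castSucc_maxPos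
    grind [mem_activeSites, isActive_zero]
  simp only [label, h]
  rw [card_insert_of_notMem (by grind), card_insert_of_notMem (by grind)]

theorem map_card_activeSites_le {M : Finset (Fin (n + 2))}
    (hM : ∀ i ∈ M, ∀ j ≤ i, j ∈ M ↔ IsActive π j ∧ 0 < j) {β : Type*} (f : ℕ → β) :
    M.val.map (fun i => f #{j ∈ activeSites π | j ≤ i}) =
      (Multiset.range #M).map fun t => f (t + 2) := by
  have hrank : ∀ i ∈ M.val, f #{j ∈ activeSites π | j ≤ i} = f (#{j ∈ M | j ≤ i} + 1) := by
    intro i hi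
    have h0 : (0 : Fin (n + 2)) ∉ M := fun h => ((hM 0 h 0 le_rfl).1 h).2.false
    rw [← card_insert_of_notMem (a := 0) (by simp [h0])]
    congr 2
    ext j
    grind [mem_activeSites, isActive_zero]
  have hmap := congrArg (Multiset.map fun t => f (t + 1)) (map_card_filter_le M)
  rw [Multiset.map_map, Multiset.map_map] at hmap
  rw [Multiset.map_congr rfl hrank]
  exact hmap

theorem map_label_insertMax_of_maxPos_eq_zero (hq : maxPos π = 0) :
    (activeSites π).val.map (fun i => label (insertMax i π)) = offspring (label π) := by
  set M : Finset (Fin (n + 2)) := {i ∈ activeSites π | 0 < i} with hM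
  have hsplit : activeSites π = insert 0 M := by
    ext j; grind [mem_activeSites, isActive_zero]
  have hchild : ∀ i ∈ M.val, label (insertMax i π) = ⟨#{j ∈ activeSites π | j ≤ i}, 0, 1⟩ := by
    intro i hi
    obtain ⟨hact, hi0⟩ : IsActive π i ∧ 0 < i := by simpa [hM] using hi
    exact hact.label_insertMax_of_maxPos_eq_zero hi0 hq
  have hmap : M.val.map (fun i => label (insertMax i π)) =
      (Multiset.range #M).map fun t => ⟨t + 2, 0, 1⟩ := by
    rw [Multiset.map_congr rfl hchild]
    exact map_card_activeSites_le (by simp [hM]) fun t => (⟨t, 0, 1⟩ : Label)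
  rw [hsplit, insert_val_of_notMem (by simp [hM]), Multiset.map_cons, hmap, label_insertMax_zero,
    label_of_maxPos_eq_zero hq]
  rfl

theorem IsAvoider.activeSites_eq_of_maxPos_pos (hπ : IsAvoider π) (hq : 0 < maxPos π) :
    (activeSites π).val = 0 ::ₘ (maxPos π).castSucc ::ₘ
      (({i ∈ activeSites π | 0 < i ∧ i < (maxPos π).castSucc} : Finset _).val +
        ({i ∈ activeSites π | (maxPos π).castSucc < i ∧ ¬IsSkewCut π i} : Finset _).val +
        ({i ∈ activeSites π | (maxPos π).castSucc < i ∧ IsSkewCut π i} : Finset _).val) := by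
  have hact := hπ.isActive_castSucc_maxPos
  rw [← disjUnion_val _ _ (disjoint_left.2 (by grind)),
    ← disjUnion_val _ _ (disjoint_left.2 (by grind)),
    ← insert_val_of_notMem (by grind), ← insert_val_of_notMem (by grind)]
  congr 1
  ext j
  grind [mem_activeSites, isActive_zero]

theorem IsAvoider.map_label_insertMax_of_maxPos_pos (hπ : IsAvoider π) (hq : 0 < maxPos π) :
    (activeSites π).val.map (fun i => label (insertMax i π)) = offspring (label π) := by
  have hmiddle : Multiset.map (fun i => label (insertMax i π))
      ({i ∈ activeSites π | 0 < i ∧ i < (maxPos π).castSucc} : Finset _).val =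
      (Multiset.range ((label π).left - 2)).map fun t => ⟨t + 2, 1, 0⟩ := by
    rw [hπ.left_label_of_maxPos_pos hq, Nat.add_sub_cancel,
      ← map_card_activeSites_le (π := π) (by grind [mem_activeSites]) fun t => (⟨t, 1, 0⟩ : Label)]
    refine Multiset.map_congr rfl fun i hi => ?_
    obtain ⟨hi, hi0, hiq⟩ : IsActive π i ∧ 0 < i ∧ i < (maxPos π).castSucc := by simpa using hi
    exact hi.label_insertMax_of_lt_maxPos hi0 hiq
  have hright : Multiset.map (fun i => label (insertMax i π))
      ({i ∈ activeSites π | (maxPos π).castSucc < i ∧ ¬IsSkewCut π i} : Finset _).val =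
      Multiset.replicate (label π).right ⟨2, 1, 0⟩ := by
    refine Multiset.eq_replicate.2 ⟨by rw [Multiset.card_map]; rfl, ?_⟩
    simp only [Multiset.mem_map, mem_val, mem_filter, mem_activeSites]
    rintro _ ⟨i, ⟨hi, hqi, hcut⟩, rfl⟩
    rw [hi.label_insertMax_of_maxPos_lt hq hqi, if_neg hcut]
  have hskew : Multiset.map (fun i => label (insertMax i π))
      ({i ∈ activeSites π | (maxPos π).castSucc < i ∧ IsSkewCut π i} : Finset _).val =
      Multiset.replicate (label π).skew ⟨2, 0, 1⟩ := by
    refine Multiset.eq_replicate.2 ⟨by rw [Multiset.card_map]; rfl, ?_⟩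
    simp only [Multiset.mem_map, mem_val, mem_filter, mem_activeSites]
    rintro _ ⟨i, ⟨hi, hqi, hcut⟩, rfl⟩
    rw [hi.label_insertMax_of_maxPos_lt hq hqi, if_pos hcut]
  have hleft : ¬(label π).left ≤ 1 := by grind [hπ.left_label_of_maxPos_pos hq]
  rw [hπ.activeSites_eq_of_maxPos_pos hq, offspring, if_neg hleft]
  simp only [Multiset.map_cons, Multiset.map_add, hmiddle, hright, hskew, label_insertMax_zero,
    hπ.label_insertMax_maxPos hq]

theorem IsAvoider.map_label_insertMax (hπ : IsAvoider π) :
    (activeSites π).val.map (fun i => label (insertMax i π)) = offspring (label π) := by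
  rcases eq_zero_or_pos (maxPos π) with hq | hq
  · exact map_label_insertMax_of_maxPos_eq_zero hq
  · exact hπ.map_label_insertMax_of_maxPos_pos hq

end Offspring

section GeneratingTree
open Finset

theorem bijective_insertMax (n : ℕ) :
    Function.Bijective fun p : Perm (Fin n) × Fin (n + 1) => insertMax p.2 p.1 := by
  rw [Fintype.bijective_iff_injective_and_card]
  refine ⟨?_, by simp [Fintype.card_perm, Nat.factorial_succ, mul_comm]⟩
  rintro ⟨π, i⟩ ⟨ρ, j⟩ (h : insertMax i π = insertMax j ρ)
  obtain rfl : i = j := by simpa using congrArg maxPos h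
  have hπρ : π = ρ := Equiv.ext fun x => by
    simpa using congrArg (· (i.succAbove x)) h
  rw [hπρ]

theorem sum_isAvoider_succ {M : Type*} [AddCommMonoid M] (n : ℕ) (g : Perm (Fin (n + 1)) → M) :
    ∑ ρ with IsAvoider ρ, g ρ = ∑ π with IsAvoider π, ∑ i ∈ activeSites π, g (insertMax i π) := by
  simp only [sum_filter, activeSites]
  rw [← (bijective_insertMax n).sum_comp, Fintype.sum_prod_type]
  refine sum_congr rfl fun π _ => ?_
  simp only [isAvoider_insertMax_iff, ite_and]
  split_ifs <;> simp

/-- The number of descendants `d` levels below a node with label `ℓ` in the generating tree. -/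
def levelCount : ℕ → Label → ℕ
  | 0, _ => 1
  | d + 1, ℓ => ((offspring ℓ).map (levelCount d)).sum

theorem sum_levelCount_label (d n : ℕ) :
    ∑ π : Perm (Fin (n + 1)) with IsAvoider π, levelCount d (label π) =
      #{π : Perm (Fin (n + 1 + d)) | IsAvoider π} := by
  induction d generalizing n with
  | zero => simp [levelCount]
  | succ d ih =>
    rw [← add_assoc, Nat.add_right_comm _ d 1, ← ih (n + 1), sum_isAvoider_succ (n + 1)]
    refine sum_congr rfl fun π hπ => ?_
    rw [levelCount, ← (mem_filter.1 hπ).2.map_label_insertMax, Multiset.map_map]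
    rfl

theorem label_one : label (1 : Perm (Fin 1)) = ⟨1, 0, 1⟩ := by
  ext <;> decide

theorem card_isAvoider_succ (d : ℕ) :
    #{π : Perm (Fin (d + 1)) | IsAvoider π} = levelCount d ⟨1, 0, 1⟩ := by
  have hone : ({π : Perm (Fin 1) | IsAvoider π} : Finset _) = {1} := by decide
  rw [add_comm d, ← sum_levelCount_label d 0, hone, sum_singleton, label_one]

end GeneratingTree

section PowerSeries

theorem eq_zero_of_eq_X_mul_succ {R : Type*} [Semiring R] {u : ℕ → R⟦X⟧}
    (h : ∀ m, u m = X * u (m + 1)) (m : ℕ) : u m = 0 := by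
  ext N
  induction N generalizing m with
  | zero => rw [h m]; simp
  | succ N ih => rw [h m, coeff_succ_X_mul]; simpa using ih (m + 1)

/-- The generating function, by level, of the subtree below a node with label `ℓ`. -/
noncomputable def labelGF (ℓ : Label) : ℚ⟦X⟧ := .mk fun d => (levelCount d ℓ : ℚ)

theorem avoiderGF_eq_one_add : avoiderGF {![2,0,3,1], ![1,2,0,3], ![0,3,1,2]} =
    1 + X * labelGF ⟨1, 0, 1⟩ := by
  ext (_ | d)
  · simp [avoiderGF, avoiderCount_eq_card, IsAvoider]
  · simp [avoiderGF, avoiderCount_eq_card, card_isAvoider_succ, labelGF, coeff_succ_X_mul,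
      coeff_one]

theorem labelGF_eq_one_add (ℓ : Label) :
    labelGF ℓ = 1 + X * ((offspring ℓ).map labelGF).sum := by
  ext (_ | d)
  · simp [labelGF, levelCount]
  · simp [labelGF, levelCount, coeff_succ_X_mul, coeff_one, map_multiset_sum, Nat.cast_multiset_sum,
      Multiset.map_map, Function.comp_def]

theorem labelGF_one (p : ℕ) : labelGF ⟨1, 0, p⟩ =
    1 + X * (labelGF ⟨1, 0, p + 1⟩ + ∑ t ∈ Finset.range p, labelGF ⟨t + 2, 0, 1⟩) := by
  rw [labelGF_eq_one_add]
  simp [offspring, Finset.sum, Multiset.map_map]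

theorem labelGF_add_two (k r p : ℕ) : labelGF ⟨k + 2, r, p⟩ =
    1 + X * (labelGF ⟨1, 0, p + 1⟩ + labelGF ⟨k + 2, r + 1, p⟩ +
      ∑ t ∈ Finset.range k, labelGF ⟨t + 2, 1, 0⟩ +
      (r : ℚ⟦X⟧) * labelGF ⟨2, 1, 0⟩ + (p : ℚ⟦X⟧) * labelGF ⟨2, 0, 1⟩) := by
  rw [labelGF_eq_one_add]
  have hleft : ¬k + 2 ≤ 1 := by lia
  simp only [offspring, if_neg hleft, Nat.add_sub_cancel, Multiset.map_cons, Multiset.map_add,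
    Multiset.map_replicate, Multiset.map_map, Multiset.sum_cons, Multiset.sum_add,
    Multiset.sum_replicate, nsmul_eq_mul, Finset.sum, Finset.range_val, Function.comp_def]
  ring

theorem one_sub_X_ne_zero {R : Type*} [Ring R] [Nontrivial R] : (1 - X : R⟦X⟧) ≠ 0 :=
  fun h => by simpa using congrArg constantCoeff h

theorem one_sub_X_mul_labelGF_right_succ_sub (k r p : ℕ) :
    (1 - X) * (labelGF ⟨k + 2, r + 1, p⟩ - labelGF ⟨k + 2, r, p⟩) = X * labelGF ⟨2, 1, 0⟩ := by
  refine sub_eq_zero.1 (eq_zero_of_eq_X_mul_succ (u := fun r => (1 - X) *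
    (labelGF ⟨k + 2, r + 1, p⟩ - labelGF ⟨k + 2, r, p⟩) - X * labelGF ⟨2, 1, 0⟩) (fun r => ?_) r)
  have hr := labelGF_add_two k r p
  have hr' := labelGF_add_two k (r + 1) p
  push_cast at hr'
  linear_combination (1 - X) * hr' - (1 - X) * hr

theorem one_sub_X_mul_labelGF_add_three (k : ℕ) :
    (1 - X) * labelGF ⟨k + 3, 1, 0⟩ = labelGF ⟨k + 2, 1, 0⟩ := by
  apply mul_left_cancel₀ one_sub_X_ne_zero
  have hk := labelGF_add_two k 1 0
  have hk' := labelGF_add_two (k + 1) 1 0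
  rw [Finset.sum_range_succ] at hk'
  linear_combination (1 - X) * hk' - (1 - X) * hk
    + X * one_sub_X_mul_labelGF_right_succ_sub (k + 1) 1 0
    - X * one_sub_X_mul_labelGF_right_succ_sub k 1 0

theorem one_sub_X_mul_labelGF_skew_sub_right (k : ℕ) :
    (1 - X) * (labelGF ⟨k + 2, 0, 1⟩ - labelGF ⟨k + 2, 1, 0⟩) =
      X * (labelGF ⟨1, 0, 2⟩ - labelGF ⟨1, 0, 1⟩ + labelGF ⟨2, 0, 1⟩ - labelGF ⟨2, 1, 0⟩) := by
  apply mul_left_cancel₀ one_sub_X_ne_zero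
  have hright := labelGF_add_two k 1 0
  have hskew := labelGF_add_two k 0 1
  push_cast at hright hskew
  linear_combination (1 - X) * hskew - (1 - X) * hright
    + X * one_sub_X_mul_labelGF_right_succ_sub k 0 1
    - X * one_sub_X_mul_labelGF_right_succ_sub k 1 0

theorem labelGF_skew_sub_right (k : ℕ) :
    labelGF ⟨k + 2, 0, 1⟩ - labelGF ⟨k + 2, 1, 0⟩ = labelGF ⟨2, 0, 1⟩ - labelGF ⟨2, 1, 0⟩ := by
  apply mul_left_cancel₀ one_sub_X_ne_zero
  rw [one_sub_X_mul_labelGF_skew_sub_right, ← one_sub_X_mul_labelGF_skew_sub_right 0]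

theorem labelGF_one_skew_succ_sub (p : ℕ) :
    (1 - 2 * X) * (1 - X) * (labelGF ⟨1, 0, p + 1⟩ - labelGF ⟨1, 0, p⟩) =
      (1 - X) ^ 2 * X * labelGF ⟨p + 2, 1, 0⟩ +
        (1 - 2 * X) * X * (labelGF ⟨2, 0, 1⟩ - labelGF ⟨2, 1, 0⟩) := by
  refine sub_eq_zero.1 (eq_zero_of_eq_X_mul_succ (u := fun p =>
    (1 - 2 * X) * (1 - X) * (labelGF ⟨1, 0, p + 1⟩ - labelGF ⟨1, 0, p⟩) -
      ((1 - X) ^ 2 * X * labelGF ⟨p + 2, 1, 0⟩ +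
        (1 - 2 * X) * X * (labelGF ⟨2, 0, 1⟩ - labelGF ⟨2, 1, 0⟩))) (fun p => ?_) p)
  have hp := labelGF_one p
  have hp' := labelGF_one (p + 1)
  rw [Finset.sum_range_succ] at hp'
  linear_combination (1 - 2 * X) * (1 - X) * hp' - (1 - 2 * X) * (1 - X) * hp
    + (1 - 2 * X) * (1 - X) * X * labelGF_skew_sub_right p
    + (1 - X) * X ^ 2 * one_sub_X_mul_labelGF_add_three p

theorem one_sub_two_X_mul_labelGF_two_sub :
    (1 - 2 * X) * (labelGF ⟨2, 0, 1⟩ - labelGF ⟨2, 1, 0⟩) =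
      X * (labelGF ⟨1, 0, 2⟩ - labelGF ⟨1, 0, 1⟩) := by
  linear_combination one_sub_X_mul_labelGF_skew_sub_right 0

theorem labelGF_one_two_sub_labelGF_one_one :
    (1 - 3 * X + X ^ 2) * (labelGF ⟨1, 0, 2⟩ - labelGF ⟨1, 0, 1⟩) =
      X * (1 - X) * labelGF ⟨2, 1, 0⟩ := by
  linear_combination labelGF_one_skew_succ_sub 1
    + (1 - X) * X * one_sub_X_mul_labelGF_add_three 0 + X * one_sub_two_X_mul_labelGF_two_sub

theorem labelGF_two_one_zero :
    (1 - 3 * X + X ^ 2) * labelGF ⟨2, 1, 0⟩ = (1 - X) * (1 + X * labelGF ⟨1, 0, 1⟩) := by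
  have h := labelGF_add_two 0 1 0
  simp only [Finset.sum_range_zero] at h
  push_cast at h
  linear_combination (1 - X) * h + X * one_sub_X_mul_labelGF_right_succ_sub 0 1 0

theorem labelGF_one_zero_one : (1 - X) * labelGF ⟨1, 0, 1⟩ =
    1 + X * ((labelGF ⟨1, 0, 2⟩ - labelGF ⟨1, 0, 1⟩) + labelGF ⟨2, 1, 0⟩ +
      (labelGF ⟨2, 0, 1⟩ - labelGF ⟨2, 1, 0⟩)) := by
  have h := labelGF_one 1
  rw [Finset.sum_range_one] at h
  linear_combination h

end PowerSeries

theorem statement_13 :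
    ((1 : PowerSeries ℚ) - X) * (1 - 8*X + 22*X^2 - 24*X^3 + 8*X^4 - X^5) * avoiderGF ({![2,0,3,1], ![1,2,0,3], ![0,3,1,2]} : Set (Fin 4 → Fin 4)) =
      (1 - 2*X) * (1 - 3*X + X^2)^2 := by
  rw [avoiderGF_eq_one_add]
  linear_combination
    X * (1 - 2 * X) * (1 - 3 * X + X ^ 2) ^ 2 * labelGF_one_zero_one
    + X ^ 2 * (1 - 3 * X + X ^ 2) ^ 2 * one_sub_two_X_mul_labelGF_two_sub
    + X ^ 2 * (1 - 3 * X + X ^ 2) * (1 - X) * labelGF_one_two_sub_labelGF_one_one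
    + (X ^ 2 * (1 - 2 * X) * (1 - 3 * X + X ^ 2) + X ^ 3 * (1 - X) ^ 2) * labelGF_two_one_zero
end
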